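/- arXiv:2407.17680 — 4 statements merged into one kernel-verified Lean document; each statement's English description precedes it below -/
import Mathlib

section
/- Let M ≥ 1 be an integer and let f ∈ ℤ[t] be a non-constant polynomial that is irreducible over ℚ. Then the number of rational numbers r with h(r) ≤ X, f(r) ≠ 0, and ω(s(f(r))) < M is O_{f,M}(X² / log log X); that is, there is a constant C (depending only on f and M) such that for all X ≥ 16 this count is at most C · X² / log log X. -/
/-- The squarefree part of a nonzero integer: the product of all primes dividing it to an
odd power. -/
def sqfreePart (n : ℤ) : ℕ :=
  ∏ p ∈ n.natAbs.primeFactors.filter (fun p => Odd (n.natAbs.factorization p)), p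

/-- The squarefree part of a nonzero rational `u/v` in lowest terms: the squarefree part of
the integer `u·v`. -/
def sqfreePartRat (x : ℚ) : ℕ := sqfreePart (x.num * (x.den : ℤ))

/-- The height of a rational number `a/b` in lowest terms: `max(|a|, b)`. -/
def ratHeight (r : ℚ) : ℕ := max r.num.natAbs r.den

open NumberField nonZeroDivisors

section A
variable (K : Type*) [Field K] [NumberField K]

lemma one_lt_absNorm {P : Ideal (𝓞 K)} (hP : P.IsPrime) (h0 : P ≠ ⊥) : 2 ≤ Ideal.absNorm P := by
  have h1 : Ideal.absNorm P ≠ 0 := by rwa [Ne, Ideal.absNorm_eq_zero_iff]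
  have h2 : Ideal.absNorm P ≠ 1 := by
    rw [Ne, Ideal.absNorm_eq_one_iff]; exact hP.ne_top
  omega

open Classical in
lemma euler_upper (T S : Finset (Ideal (𝓞 K)))
    (hT : ∀ P ∈ T, P.IsPrime ∧ P ≠ ⊥)
    (hS : ∀ I ∈ S, I ≠ ⊥ ∧ ∀ P : Ideal (𝓞 K), P.IsPrime → P ≠ ⊥ → P ∣ I → P ∈ T) :
    ∑ I ∈ S, (1 / (Ideal.absNorm I : ℝ)) ≤ ∏ P ∈ T, (1 - 1 / (Ideal.absNorm P : ℝ))⁻¹ := by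
  let e : Ideal (𝓞 K) → Ideal (𝓞 K) → ℕ := fun I P =>
    (UniqueFactorizationMonoid.normalizedFactors I).count P
  have hprod : ∀ I ∈ S, I = ∏ P ∈ T, P ^ e I P := by
    intro I hI
    obtain ⟨h0, h1⟩ := hS I hI
    conv_lhs => rw [← Ideal.prod_normalizedFactors_eq_self h0]
    rw [Finset.prod_multiset_count]
    apply Finset.prod_subset
    · intro P hP
      rw [Multiset.mem_toFinset] at hP
      have hp := UniqueFactorizationMonoid.prime_of_normalized_factor P hP
      exact h1 P (Ideal.isPrime_of_prime hp) hp.ne_zero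
        (UniqueFactorizationMonoid.dvd_of_mem_normalizedFactors hP)
    · intro P _ hP
      rw [Multiset.mem_toFinset] at hP
      rw [Multiset.count_eq_zero_of_notMem hP, pow_zero]
  obtain ⟨E, hE⟩ : ∃ E, ∀ I ∈ S, ∀ P ∈ T, e I P < E := by
    refine ⟨(S.sup fun I => T.sup fun P => e I P) + 1, fun I hI P hP => Nat.lt_succ_of_le ?_⟩
    exact (Finset.le_sup (f := fun P => e I P) hP).trans
      (Finset.le_sup (f := fun I => T.sup fun P => e I P) hI)
  have key : ∑ I ∈ S, (1 / (Ideal.absNorm I : ℝ)) ≤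
      ∏ P ∈ T, ∑ k ∈ Finset.range E, (1 / (Ideal.absNorm P : ℝ)) ^ k := by
    rw [Finset.prod_sum]
    have hinj : Set.InjOn (fun I (P : Ideal (𝓞 K)) (_ : P ∈ T) => e I P) (S : Set (Ideal (𝓞 K))) := by
      intro I hI J hJ hIJ
      rw [hprod I hI, hprod J hJ]
      refine Finset.prod_congr rfl fun P hP => ?_
      have := congrFun (congrFun hIJ P) hP
      simp only at this
      rw [this]
    have h1 : ∑ I ∈ S, (1 / (Ideal.absNorm I : ℝ)) =
       ∑ g ∈ S.image (fun I (P : Ideal (𝓞 K)) (_ : P ∈ T) => e I P),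
         ∏ x ∈ T.attach, (1 / (Ideal.absNorm x.1 : ℝ)) ^ g x.1 x.2 := by
      rw [Finset.sum_image hinj]
      refine Finset.sum_congr rfl fun I hI => ?_
      conv_lhs => rw [hprod I hI]
      rw [Finset.prod_attach T (fun P => (1 / (Ideal.absNorm P : ℝ)) ^ e I P)]
      simp [map_prod]
    rw [h1]
    apply Finset.sum_le_sum_of_subset_of_nonneg
    · intro g hg
      obtain ⟨I, hI, rfl⟩ := Finset.mem_image.1 hg
      rw [Finset.mem_pi]
      intro P hP
      exact Finset.mem_range.2 (hE I hI P hP)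
    · intros; positivity
  refine key.trans ?_
  apply Finset.prod_le_prod
  · intros; positivity
  · intro P hP
    have h2 : (2:ℝ) ≤ Ideal.absNorm P := by
      exact_mod_cast one_lt_absNorm K (hT P hP).1 (hT P hP).2
    have h3 : (1 / (Ideal.absNorm P : ℝ)) < 1 := by
      rw [div_lt_one] <;> linarith
    rw [← tsum_geometric_of_lt_one (by positivity) h3]
    exact (summable_geometric_of_lt_one (by positivity) h3).sum_le_tsum _ (fun _ _ => by positivity)

/-- nonzero ideals of norm at most `n` -/
noncomputable def idealsLE (n : ℕ) : Finset (Ideal (𝓞 K)) := by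
  classical
  exact (Ideal.finite_setOfPred_absNorm_le (S := 𝓞 K) n).toFinset.filter (fun I => I ≠ ⊥)

lemma mem_idealsLE {n : ℕ} {I : Ideal (𝓞 K)} : I ∈ idealsLE K n ↔ Ideal.absNorm I ≤ n ∧ I ≠ ⊥ := by
  classical
  simp [idealsLE]

lemma card_lower : ∃ c : ℝ, 0 < c ∧ ∃ n0 : ℕ, ∀ n : ℕ, n0 ≤ n → c * n ≤ (idealsLE K n).card := by
  have h := (Ideal.tendsto_norm_le_div_atTop₀ K).comp tendsto_natCast_atTop_atTop
  have hpos := dedekindZeta_residue_pos K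
  rw [dedekindZeta_residue_def] at hpos
  have h2 := h.eventually (lt_mem_nhds (half_lt_self hpos))
  obtain ⟨n0, hn0⟩ := Filter.eventually_atTop.1 h2
  refine ⟨_, half_pos hpos, max n0 1, fun n hn => ?_⟩
  have h3 := hn0 n (le_trans (le_max_left _ _) hn)
  have hn1 : (0:ℝ) < n := by exact_mod_cast (le_trans (le_max_right n0 1) hn)
  simp only [Function.comp] at h3
  rw [lt_div_iff₀ hn1] at h3
  refine h3.le.trans (le_of_eq ?_)
  congr 1
  have h5 : Nat.card {I // I ∈ idealsLE K n} = (idealsLE K n).card := by simp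
  rw [← h5]
  refine Nat.card_congr ⟨fun I => ⟨I.1.1, (mem_idealsLE K).2 ⟨by exact_mod_cast I.2,
    nonZeroDivisors.ne_zero I.1.2⟩⟩, fun I => ⟨⟨I.1, mem_nonZeroDivisors_of_ne_zero
      ((mem_idealsLE K).1 I.2).2⟩, by exact_mod_cast ((mem_idealsLE K).1 I.2).1⟩,
      fun _ => rfl, fun _ => rfl⟩

lemma sum_step (n : ℕ) : ∑ I ∈ idealsLE K (n+1), (1 / (Ideal.absNorm I : ℝ)) =
    ∑ I ∈ idealsLE K n, (1 / (Ideal.absNorm I : ℝ)) +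
      (((idealsLE K (n+1)).card : ℝ) - (idealsLE K n).card) / (n+1) := by
  classical
  have hsub : idealsLE K n ⊆ idealsLE K (n+1) := by
    intro I hI
    rw [mem_idealsLE] at *
    exact ⟨by omega, hI.2⟩
  rw [← Finset.sum_sdiff hsub, add_comm]
  congr 1
  rw [← Finset.cast_card_sdiff hsub, div_eq_mul_one_div, ← nsmul_eq_mul]
  apply Finset.sum_eq_card_nsmul
  intro I hI
  rw [Finset.mem_sdiff, mem_idealsLE, mem_idealsLE] at hI
  have : Ideal.absNorm I = n + 1 := by
    by_contra hne
    exact hI.2 ⟨by omega, hI.1.2⟩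
  rw [this]; push_cast; rfl

lemma sum_ideals_lower : ∃ c : ℝ, 0 < c ∧ ∃ n0 : ℕ, ∀ n : ℕ, n0 ≤ n →
    c * Real.log n ≤ ∑ I ∈ idealsLE K n, (1 / (Ideal.absNorm I : ℝ)) := by
  obtain ⟨c, hc, n0, h⟩ := card_lower K
  have main : ∀ n, n0 ≤ n → ((idealsLE K n).card : ℝ) / (n+1) +
      c * ((harmonic (n+1) : ℝ) - harmonic (n0+1)) ≤
      ∑ I ∈ idealsLE K n, (1 / (Ideal.absNorm I : ℝ)) := by
    intro n hn
    induction n, hn using Nat.le_induction with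
    | base =>
      rw [sub_self, mul_zero, add_zero, div_eq_mul_one_div, ← nsmul_eq_mul]
      apply Finset.card_nsmul_le_sum
      intro I hI
      rw [mem_idealsLE] at hI
      have h0 : 0 < Ideal.absNorm I := by
        rw [Nat.pos_iff_ne_zero, Ne, Ideal.absNorm_eq_zero_iff]; exact hI.2
      apply one_div_le_one_div_of_le
      · exact_mod_cast h0
      · exact_mod_cast hI.1.trans (Nat.le_succ _)
    | succ n hn ih =>
      rw [sum_step, harmonic_succ (n+1)]
      have h1 := h (n+1) (by omega)
      push_cast at h1 ⊢
      have h2 : c / (n+2) ≤ ((idealsLE K (n+1)).card : ℝ) * (1/(n+1) - 1/(n+2)) := by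
        have : (1/((n:ℝ)+1) - 1/(n+2)) = 1 / ((n+1)*(n+2)) := by field_simp; ring
        rw [this, mul_one_div, div_le_div_iff₀ (by positivity) (by positivity)]
        nlinarith [h1, (Nat.cast_nonneg n : (0:ℝ) ≤ n)]
      have h3 : (((idealsLE K (n+1)).card : ℝ) - (idealsLE K n).card) / (n+1) =
        (idealsLE K (n+1)).card * (1/((n:ℝ)+1)) - (idealsLE K n).card / ((n:ℝ)+1) := by ring
      have h4 : ((n:ℝ)+1+1) = n+2 := by ring
      rw [h3, h4]
      have h5 : ((idealsLE K (n+1)).card : ℝ) / (n+2) + c * (harmonic (n+1) + ((n:ℝ)+2)⁻¹ - harmonic (n0+1))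
        = (idealsLE K (n+1)).card * (1/((n:ℝ)+2)) + c * (harmonic (n+1) - harmonic (n0+1)) + c/(n+2) := by ring
      rw [h5]
      linarith
  have ht := (Real.tendsto_log_atTop.comp tendsto_natCast_atTop_atTop).eventually_ge_atTop
    (2 * (harmonic (n0+1) : ℝ))
  obtain ⟨n1, hn1⟩ := Filter.eventually_atTop.1 ht
  refine ⟨c/2, by positivity, max (max n0 n1) 1, fun n hn => ?_⟩
  have := main n (by omega)
  have h2 := hn1 n (by omega)
  simp only [Function.comp] at h2
  have h3 := log_add_one_le_harmonic (n+1)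
  have h4 : Real.log n ≤ Real.log (((n+1 : ℕ):ℝ) + 1) := by
    apply Real.log_le_log
    · exact_mod_cast (by omega : 0 < n)
    · push_cast; linarith
  have h5 : (0:ℝ) ≤ ((idealsLE K n).card : ℝ) / (n+1) := by positivity
  push_cast at h3 h4
  nlinarith

/-- nonzero primes of norm at most `n` -/
noncomputable def primesLE' (n : ℕ) : Finset (Ideal (𝓞 K)) := by
  classical
  exact (idealsLE K n).filter (fun I => I.IsPrime)

lemma mem_primesLE' {n : ℕ} {I : Ideal (𝓞 K)} :
    I ∈ primesLE' K n ↔ Ideal.absNorm I ≤ n ∧ I ≠ ⊥ ∧ I.IsPrime := by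
  classical
  simp [primesLE', mem_idealsLE, and_assoc]

lemma sum_primes_lower : ∃ C : ℝ, ∃ n0 : ℕ, ∀ n : ℕ, n0 ≤ n →
    Real.log (Real.log n) - C ≤ 2 * ∑ P ∈ primesLE' K n, (1 / (Ideal.absNorm P : ℝ)) := by
  obtain ⟨c, hc, n0, h⟩ := sum_ideals_lower K
  refine ⟨- Real.log c, max n0 2, fun n hn => ?_⟩
  have h1 := h n (by omega)
  have h2 := euler_upper K (primesLE' K n) (idealsLE K n)
    (fun P hP => by rw [mem_primesLE'] at hP; exact ⟨hP.2.2, hP.2.1⟩)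
    (fun I hI => by
      rw [mem_idealsLE] at hI
      refine ⟨hI.2, fun P hP h0 hPI => ?_⟩
      rw [mem_primesLE']
      refine ⟨le_trans (Nat.le_of_dvd ?_ (map_dvd Ideal.absNorm hPI)) hI.1, h0, hP⟩
      rw [Nat.pos_iff_ne_zero, Ne, Ideal.absNorm_eq_zero_iff]; exact hI.2)
  have h3 : ∏ P ∈ primesLE' K n, (1 - 1 / (Ideal.absNorm P : ℝ))⁻¹ ≤
      Real.exp (2 * ∑ P ∈ primesLE' K n, (1 / (Ideal.absNorm P : ℝ))) := by
    rw [Finset.mul_sum, Real.exp_sum]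
    have hx : ∀ P ∈ primesLE' K n, 0 ≤ 1 / (Ideal.absNorm P : ℝ) ∧ 1 / (Ideal.absNorm P : ℝ) ≤ 1/2 := by
      intro P hP
      rw [mem_primesLE'] at hP
      have h2 : (2:ℝ) ≤ Ideal.absNorm P := by
        exact_mod_cast one_lt_absNorm K hP.2.2 hP.2.1
      exact ⟨by positivity, one_div_le_one_div_of_le (by norm_num) h2⟩
    apply Finset.prod_le_prod
    · intro P hP
      have := hx P hP
      apply inv_nonneg.2; linarith
    · intro P hP
      have := hx P hP
      set x := 1 / (Ideal.absNorm P : ℝ)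
      have h5 := Real.add_one_le_exp (2 * x)
      refine le_trans ?_ h5
      rw [inv_le_iff_one_le_mul₀ (by linarith)]
      nlinarith
  have hl : 0 < Real.log n := Real.log_pos (by exact_mod_cast (by omega : 1 < n))
  have h4 := Real.log_le_log (by positivity) ((h1.trans h2).trans h3)
  rw [Real.log_exp, Real.log_mul hc.ne' hl.ne'] at h4
  linarith
end A

/-- `p` is a prime modulo which `f` has a simple root. -/
def GoodPrime (f : Polynomial ℤ) (p : ℕ) : Prop :=
  p.Prime ∧ ∃ x : ℤ, (p : ℤ) ^ 2 ∣ f.eval x ∧ ¬ (p : ℤ) ∣ f.derivative.eval x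

lemma hensel_sq (f : Polynomial ℤ) (p : ℕ) (hp : p.Prime) (x : ℤ) (h1 : (p : ℤ) ∣ f.eval x)
    (h2 : ¬ (p : ℤ) ∣ f.derivative.eval x) : GoodPrime f p := by
  refine ⟨hp, ?_⟩
  obtain ⟨m, hm⟩ := h1
  have hcop : IsCoprime (f.derivative.eval x) (p : ℤ) :=
    ((Nat.prime_iff_prime_int.1 hp).coprime_iff_not_dvd.2 h2).symm
  obtain ⟨a, b, hab⟩ := hcop
  let t : ℤ := - (a * m) * p
  obtain ⟨k, hk⟩ := f.binomExpansion x t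
  obtain ⟨k', hk'⟩ := f.derivative.binomExpansion x t
  refine ⟨x + t, ?_, ?_⟩
  · rw [hk, hm]
    refine ⟨m * b + k * (a * m)^2, ?_⟩
    simp only [t]
    linear_combination (- m * p) * hab
  · rw [hk']
    intro h
    apply h2
    have h3 : (p : ℤ) ∣ f.derivative.derivative.eval x * t + k' * t^2 := by
      refine ⟨f.derivative.derivative.eval x * (-(a*m)) + k' * (a*m)^2*p, ?_⟩
      simp only [t]; ring
    rw [add_assoc] at h
    exact (Int.dvd_add_left h3).1 h

lemma exists_bezout (f : Polynomial ℤ) (hirr : Irreducible (f.map (Int.castRingHom ℚ))) :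
    ∃ D : ℤ, D ≠ 0 ∧ ∃ U V : Polynomial ℤ, U * f + V * f.derivative = Polynomial.C D := by
  obtain ⟨u, v, huv⟩ := hirr.separable
  obtain ⟨b1, hb1, h1⟩ := IsLocalization.integerNormalization_spec (nonZeroDivisors ℤ) u
  obtain ⟨b2, hb2, h2⟩ := IsLocalization.integerNormalization_spec (nonZeroDivisors ℤ) v
  set U := IsLocalization.integerNormalization (nonZeroDivisors ℤ) u
  set V := IsLocalization.integerNormalization (nonZeroDivisors ℤ) v
  refine ⟨b1 * b2, mul_ne_zero (nonZeroDivisors.ne_zero hb1) (nonZeroDivisors.ne_zero hb2),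
    Polynomial.C (b2 : ℤ) * U, Polynomial.C (b1 : ℤ) * V, ?_⟩
  apply Polynomial.map_injective (Int.castRingHom ℚ) Int.cast_injective
  simp only [algebraMap_int_eq] at h1 h2
  have e1 : ((b1 : ℤ) • u : Polynomial ℚ) = Polynomial.C ((b1:ℤ):ℚ) * u := by
    rw [← Polynomial.smul_eq_C_mul, ← Int.cast_smul_eq_zsmul ℚ]
  have e2 : ((b2 : ℤ) • v : Polynomial ℚ) = Polynomial.C ((b2:ℤ):ℚ) * v := by
    rw [← Polynomial.smul_eq_C_mul, ← Int.cast_smul_eq_zsmul ℚ]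
  have e1' : U.map (Int.castRingHom ℚ) = Polynomial.C ((b1:ℤ):ℚ) * u := h1.trans e1
  have e2' : V.map (Int.castRingHom ℚ) = Polynomial.C ((b2:ℤ):ℚ) * v := h2.trans e2
  simp only [Polynomial.C_mul, Polynomial.map_add, Polynomial.map_mul, Polynomial.map_C, e1', e2']
  simp only [Int.coe_castRingHom]
  rw [← Polynomial.derivative_map]
  linear_combination (Polynomial.C ((b1:ℤ):ℚ) * Polynomial.C ((b2:ℤ):ℚ)) * huv

section B
variable (K : Type*) [Field K] [NumberField K]

open Classical in
lemma card_over (p : ℕ) (hp : p.Prime) (T : Finset (Ideal (𝓞 K)))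
    (hT : ∀ P ∈ T, P.IsPrime ∧ P ≠ ⊥ ∧ (p : 𝓞 K) ∈ P ∧ p ≤ Ideal.absNorm P) :
    T.card ≤ Module.finrank ℤ (𝓞 K) := by
  have hdvd : ∏ P ∈ T, P ∣ Ideal.span {(p : 𝓞 K)} := by
    apply Finset.prod_primes_dvd
    · intro P hP
      exact Ideal.prime_of_isPrime (hT P hP).2.1 (hT P hP).1
    · intro P hP
      rw [Ideal.dvd_span_singleton]
      exact (hT P hP).2.2.1
  have h1 := map_dvd Ideal.absNorm hdvd
  rw [Ideal.absNorm_span_natCast, map_prod] at h1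
  have h2 := Nat.le_of_dvd (pow_pos hp.pos _) h1
  have h3 : p ^ T.card ≤ ∏ P ∈ T, Ideal.absNorm P :=
    Finset.pow_card_le_prod _ _ _ (fun P hP => (hT P hP).2.2.2)
  exact (Nat.pow_le_pow_iff_right hp.one_lt).1 (h3.trans h2)

lemma root_of_norm_prime (f : Polynomial ℤ) (θ : K) (hθ : Polynomial.aeval θ f = 0)
    (P : Ideal (𝓞 K)) (p : ℕ) (hp : p.Prime) (hP : Ideal.absNorm P = p)
    (hl : ¬ (p : ℤ) ∣ f.leadingCoeff) : ∃ x : ℤ, (p : ℤ) ∣ f.eval x := by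
  have hintegral := isIntegral_leadingCoeff_smul f θ hθ
  obtain ⟨α, hα⟩ : ∃ α : 𝓞 K, (α : K) = f.leadingCoeff • θ := ⟨⟨_, hintegral⟩, rfl⟩
  have : Fact p.Prime := ⟨hp⟩
  have hcard : Nat.card (𝓞 K ⧸ P) = p := by
    rw [← hP]; rfl
  have : Finite (𝓞 K ⧸ P) := Nat.finite_of_card_ne_zero (by rw [hcard]; exact hp.ne_zero)
  have := Fintype.ofFinite (𝓞 K ⧸ P)
  rw [Nat.card_eq_fintype_card] at hcard
  let e := ZMod.ringEquivOfPrime (𝓞 K ⧸ P) hp hcard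
  let φ : 𝓞 K →+* ZMod p := (e.symm : (𝓞 K ⧸ P) →+* ZMod p).comp (Ideal.Quotient.mk P)
  have h0 : Polynomial.aeval α (f.scaleRoots f.leadingCoeff) = 0 := by
    apply RingOfIntegers.coe_injective
    have := Polynomial.scaleRoots_aeval_eq_zero (r := f.leadingCoeff) hθ
    have h5 : ((Polynomial.aeval α (f.scaleRoots f.leadingCoeff) : 𝓞 K) : K) =
      Polynomial.aeval (α : K) (f.scaleRoots f.leadingCoeff) :=
        (Polynomial.aeval_algebraMap_apply K α _).symm
    refine h5.trans ?_
    rw [hα, zsmul_eq_mul, ← eq_intCast (algebraMap ℤ K), this, map_zero]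
  have h1 : Polynomial.eval₂ (Int.castRingHom (ZMod p)) (φ α) (f.scaleRoots f.leadingCoeff) = 0 := by
    have := congrArg φ h0
    rw [Polynomial.aeval_def, Polynomial.hom_eval₂, map_zero] at this
    rwa [Subsingleton.elim (Int.castRingHom (ZMod p)) (φ.comp (algebraMap ℤ (𝓞 K)))]
  have hl' : ((f.leadingCoeff : ℤ) : ZMod p) ≠ 0 := by
    rwa [Ne, ZMod.intCast_zmod_eq_zero_iff_dvd]
  have h2 := Polynomial.scaleRoots_eval₂_mul (p := f) (Int.castRingHom (ZMod p))
    (r := φ α / (f.leadingCoeff : ZMod p)) f.leadingCoeff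
  rw [eq_intCast, mul_div_cancel₀ _ hl', h1] at h2
  have h3 : Polynomial.eval₂ (Int.castRingHom (ZMod p)) (φ α / (f.leadingCoeff : ZMod p)) f = 0 := by
    rcases mul_eq_zero.1 h2.symm with h | h
    · exact absurd h (pow_ne_zero _ hl')
    · exact h
  obtain ⟨x, hx⟩ := ZMod.intCast_surjective (φ α / (f.leadingCoeff : ZMod p))
  refine ⟨x, ?_⟩
  rw [← ZMod.intCast_zmod_eq_zero_iff_dvd]
  rw [← hx] at h3
  have h4 := Polynomial.hom_eval₂ f (RingHom.id ℤ) (Int.castRingHom (ZMod p)) x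
  simp only [RingHom.comp_id, eq_intCast] at h4
  rw [h3] at h4
  exact h4

open Classical in
lemma prime_sum_upper (f : Polynomial ℤ) (θ : K) (hθ : Polynomial.aeval θ f = 0)
    (D : ℤ) (hD : D ≠ 0) (U V : Polynomial ℤ)
    (hUV : U * f + V * f.derivative = Polynomial.C D) :
    ∃ C : ℝ, ∀ n : ℕ, ∑ P ∈ primesLE' K n, (1 / (Ideal.absNorm P : ℝ)) ≤
      Module.finrank ℤ (𝓞 K) *
        ∑ p ∈ (Finset.range (n+1)).filter (GoodPrime f), (1 / (p : ℝ)) + C := by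
  have hf0 : f ≠ 0 := by
    rintro rfl
    simp at hUV
    exact hD (by exact_mod_cast hUV.symm)
  have hex : ∀ P : Ideal (𝓞 K), ∃ p : ℕ, (P.IsPrime → P ≠ ⊥ → p.Prime ∧ (p : 𝓞 K) ∈ P ∧
      (Ideal.absNorm P = p ∨ p ^ 2 ≤ Ideal.absNorm P)) := by
    intro P
    by_cases h : P.IsPrime ∧ P ≠ ⊥
    · have := h.1.isMaximal h.2
      obtain ⟨p, k, hk, hm, hp, hn⟩ := Ideal.exists_prime_and_absNorm_eq_pow P
      refine ⟨p, fun _ _ => ⟨hp, hm, ?_⟩⟩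
      rw [hn]
      rcases Nat.lt_or_ge k 2 with h2 | h2
      · left
        rw [show k = 1 by omega, pow_one]
      · right
        exact Nat.pow_le_pow_right hp.pos h2
    · exact ⟨0, fun h1 h2 => absurd ⟨h1, h2⟩ h⟩
  choose pr hpr using hex
  let B : ℕ := (f.leadingCoeff * D).natAbs
  have hB : B ≠ 0 := by
    simp only [B, Ne, Int.natAbs_eq_zero, mul_eq_zero, Polynomial.leadingCoeff_eq_zero, hf0, hD, or_self,
      not_false_eq_true]
  let g : ℕ → ℝ := fun p => (if GoodPrime f p then 1 / (p : ℝ) else 0) + (if p ∣ B then 1 else 0)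
    + 1 / (p : ℝ) ^ 2
  have hg0 : ∀ p, 0 ≤ g p := by
    intro p
    simp only [g]
    positivity
  have hsum : Summable (fun p : ℕ => 1 / (p : ℝ) ^ 2) := by
    exact Real.summable_one_div_nat_pow.2 (by norm_num)
  refine ⟨Module.finrank ℤ (𝓞 K) * (B.divisors.card + ∑' p : ℕ, 1 / (p : ℝ) ^ 2), fun n => ?_⟩
  have hprops : ∀ P ∈ primesLE' K n, (pr P).Prime ∧ ((pr P : ℕ) : 𝓞 K) ∈ P ∧
      (Ideal.absNorm P = pr P ∨ (pr P) ^ 2 ≤ Ideal.absNorm P) ∧ pr P ≤ Ideal.absNorm P := by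
    intro P hP
    rw [mem_primesLE'] at hP
    obtain ⟨h1, h2, h3⟩ := hpr P hP.2.2 hP.2.1
    refine ⟨h1, h2, h3, ?_⟩
    rcases h3 with h | h
    · exact h.ge
    · exact (Nat.le_self_pow (by norm_num) _).trans h
  have hmap : ∀ P ∈ primesLE' K n, pr P ∈ Finset.range (n+1) := by
    intro P hP
    have h1 := (hprops P hP).2.2.2
    rw [mem_primesLE'] at hP
    rw [Finset.mem_range]
    omega
  have hterm : ∀ P ∈ primesLE' K n, 1 / (Ideal.absNorm P : ℝ) ≤ g (pr P) := by
    intro P hP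
    obtain ⟨hp, hm, hn, hle⟩ := hprops P hP
    have a1 : (0:ℝ) ≤ if GoodPrime f (pr P) then 1 / ((pr P : ℕ) : ℝ) else 0 := by positivity
    have a2 : (0:ℝ) ≤ if pr P ∣ B then 1 else 0 := by positivity
    have a3 : (0:ℝ) ≤ 1 / ((pr P : ℕ) : ℝ) ^ 2 := by positivity
    have hp0 : (0:ℝ) < (pr P : ℕ) := by exact_mod_cast hp.pos
    simp only [g]
    rcases hn with hn | hn
    · rw [hn]
      by_cases hd : pr P ∣ B
      · have : 1 / ((pr P : ℕ) : ℝ) ≤ 1 := by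
          rw [div_le_one hp0]; exact_mod_cast hp.one_le
        rw [if_pos hd] at *
        linarith
      · have hd' : ¬ ((pr P : ℕ) : ℤ) ∣ f.leadingCoeff * D := by
          rwa [Int.natCast_dvd]
        obtain ⟨x, hx⟩ := root_of_norm_prime K f θ hθ P (pr P) hp hn
          (fun h => hd' (h.mul_right _))
        have hgood : GoodPrime f (pr P) := by
          refine hensel_sq f _ hp x hx (fun h => hd' ?_)
          have h6 := congrArg (Polynomial.eval x) hUV
          simp only [Polynomial.eval_add, Polynomial.eval_mul, Polynomial.eval_C] at h6
          rw [← h6]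
          exact Dvd.dvd.mul_left (dvd_add (hx.mul_left _) (h.mul_left _)) _
        rw [if_pos hgood] at *
        linarith
    · have : 1 / (Ideal.absNorm P : ℝ) ≤ 1 / ((pr P : ℕ) : ℝ) ^ 2 := by
        apply one_div_le_one_div_of_le (by positivity)
        exact_mod_cast hn
      linarith
  have step : ∑ P ∈ primesLE' K n, (1 / (Ideal.absNorm P : ℝ)) ≤
      ∑ p ∈ Finset.range (n+1), Module.finrank ℤ (𝓞 K) * g p := by
    rw [← Finset.sum_fiberwise_of_maps_to hmap]
    apply Finset.sum_le_sum
    intro p _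
    have h1 : ∑ P ∈ primesLE' K n with pr P = p, (1 / (Ideal.absNorm P : ℝ)) ≤
        ((primesLE' K n).filter (fun P => pr P = p)).card • g p := by
      apply Finset.sum_le_card_nsmul
      intro P hP
      rw [Finset.mem_filter] at hP
      rw [← hP.2]
      exact hterm P hP.1
    refine h1.trans ?_
    rw [nsmul_eq_mul]
    apply mul_le_mul_of_nonneg_right _ (hg0 p)
    norm_cast
    rcases Finset.eq_empty_or_nonempty ((primesLE' K n).filter (fun P => pr P = p)) with h | ⟨P, hP⟩
    · rw [h]; simp
    · rw [Finset.mem_filter] at hP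
      apply card_over K p (hP.2 ▸ (hprops P hP.1).1)
      intro Q hQ
      rw [Finset.mem_filter] at hQ
      have h2 := hprops Q hQ.1
      rw [hQ.2] at h2
      have h3 := (mem_primesLE' K).1 hQ.1
      exact ⟨h3.2.2, h3.2.1, h2.2.1, h2.2.2.2⟩
  refine step.trans ?_
  rw [← Finset.mul_sum, ← mul_add]
  apply mul_le_mul_of_nonneg_left _ (Nat.cast_nonneg _)
  simp only [g]
  rw [Finset.sum_add_distrib, Finset.sum_add_distrib, Finset.sum_filter, add_assoc]
  gcongr
  · rw [← Finset.sum_filter, Finset.sum_const, nsmul_eq_mul, mul_one]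
    norm_cast
    apply Finset.card_le_card
    intro p hp
    rw [Finset.mem_filter] at hp
    exact Nat.mem_divisors.2 ⟨hp.2, hB⟩
  · exact hsum.sum_le_tsum _ (fun _ _ => by positivity)

end B

open Classical in
lemma good_sum_lower (f : Polynomial ℤ) (hirr : Irreducible (f.map (Int.castRingHom ℚ))) :
    ∃ c : ℝ, 0 < c ∧ ∃ C : ℝ, ∃ n0 : ℕ, ∀ n : ℕ, n0 ≤ n → c * Real.log (Real.log n) - C ≤
      ∑ p ∈ (Finset.range (n+1)).filter (GoodPrime f), (1 / (p : ℝ)) := by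
  have : Fact (Irreducible (f.map (Int.castRingHom ℚ))) := ⟨hirr⟩
  let K := AdjoinRoot (f.map (Int.castRingHom ℚ))
  have : FiniteDimensional ℚ K := (AdjoinRoot.powerBasis hirr.ne_zero).finite
  have : CharZero K := charZero_of_injective_algebraMap (algebraMap ℚ K).injective
  have : NumberField K := ⟨⟩
  obtain ⟨D, hD, U, V, hUV⟩ := exists_bezout f hirr
  have hθ : Polynomial.aeval (AdjoinRoot.root (f.map (Int.castRingHom ℚ))) f = 0 := by
    have h := AdjoinRoot.eval₂_root (f.map (Int.castRingHom ℚ))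
    rw [Polynomial.eval₂_map] at h
    rw [Polynomial.aeval_def]
    have e : algebraMap ℤ (AdjoinRoot (f.map (Int.castRingHom ℚ))) =
      (AdjoinRoot.of (f.map (Int.castRingHom ℚ))).comp (Int.castRingHom ℚ) := RingHom.ext_int _ _
    rw [← e] at h
    exact h
  obtain ⟨C1, h1⟩ := prime_sum_upper K f _ hθ D hD U V hUV
  obtain ⟨C2, n0, h2⟩ := sum_primes_lower K
  have hd : (0:ℝ) < Module.finrank ℤ (𝓞 K) := by
    exact_mod_cast Module.finrank_pos
  set d : ℝ := ((Module.finrank ℤ (𝓞 K) : ℕ) : ℝ)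
  refine ⟨1 / (2 * d), by positivity, (C2 / 2 + C1) / d, n0, fun n hn => ?_⟩
  have h3 := h1 n
  have h4 := h2 n hn
  rw [← mul_le_mul_iff_right₀ hd]
  have : d * (1 / (2 * d) * Real.log (Real.log n) - (C2 / 2 + C1) / d) =
    Real.log (Real.log n) / 2 - (C2/2+C1) := by field_simp
  rw [this]
  linarith

lemma mem_of_padicValRat {y : ℚ} {p : ℕ} (hp : p.Prime) (hv : padicValRat p y = 1) :
    p ∈ (sqfreePartRat y).primeFactors := by
  have : Fact p.Prime := ⟨hp⟩
  have hy : y ≠ 0 := by rintro rfl; simp at hv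
  have hn : y.num ≠ 0 := Rat.num_ne_zero.2 hy
  have hd : y.den ≠ 0 := y.den_nz
  have hna : y.num.natAbs ≠ 0 := Int.natAbs_ne_zero.2 hn
  rw [padicValRat_def] at hv
  have hv' : (padicValNat p y.num.natAbs : ℤ) - (padicValNat p y.den : ℤ) = 1 := hv
  have hpn : p ∣ y.num.natAbs := by
    by_contra h
    rw [padicValNat.eq_zero_of_not_dvd h] at hv'
    omega
  have hpd : ¬ p ∣ y.den := by
    intro h
    exact hp.one_lt.ne' (Nat.dvd_one.1 (y.reduced ▸ Nat.dvd_gcd hpn h))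
  rw [padicValNat.eq_zero_of_not_dvd hpd] at hv'
  have hfac : (y.num * (y.den : ℤ)).natAbs.factorization p = 1 := by
    rw [Int.natAbs_mul, Int.natAbs_natCast, Nat.factorization_mul hna hd, Finsupp.add_apply,
      Nat.factorization_def _ hp, Nat.factorization_def _ hp, padicValNat.eq_zero_of_not_dvd hpd]
    omega
  rw [Nat.mem_primeFactors]
  unfold sqfreePartRat sqfreePart
  refine ⟨hp, ?_, ?_⟩
  · apply Finset.dvd_prod_of_mem (fun q : ℕ => q)
    rw [Finset.mem_filter, hfac, Nat.mem_primeFactors]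
    refine ⟨⟨hp, ?_, ?_⟩, odd_one⟩
    · rw [Int.natAbs_mul]; exact hpn.mul_right _
    · rw [Int.natAbs_mul, Int.natAbs_natCast]; exact mul_ne_zero hna hd
  · rw [Finset.prod_ne_zero_iff]
    intro q hq
    exact (Nat.prime_of_mem_primeFactors (Finset.mem_filter.1 hq).1).ne_zero

lemma padicVal_eval (f : Polynomial ℤ) (r : ℚ) {p : ℕ} (hp : p.Prime) (x : ℤ)
    (h1 : (p : ℤ) ^ 2 ∣ f.eval x) (h2 : ¬ (p : ℤ) ∣ f.derivative.eval x)
    (h3 : (p : ℤ) ∣ r.num - r.den * x) (h4 : ¬ (p : ℤ) ^ 2 ∣ r.num - r.den * x) :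
    padicValRat p (Polynomial.aeval r f) = 1 := by
  have : Fact p.Prime := ⟨hp⟩
  have hpI : Prime (p : ℤ) := Nat.prime_iff_prime_int.1 hp
  have hden : ¬ p ∣ r.den := by
    intro h
    have h5 : (p : ℤ) ∣ r.num := by
      have : (p : ℤ) ∣ r.den * x := (Int.natCast_dvd_natCast.2 h).mul_right _
      simpa using dvd_add h3 this
    have h6 : p ∣ r.num.natAbs := Int.natCast_dvd.1 h5
    exact hp.one_lt.ne' (Nat.dvd_one.1 (r.reduced ▸ Nat.dvd_gcd h6 h))
  have hunit : ∀ z : ℤ, ¬ (p : ℤ) ∣ z → IsUnit (z : ℤ_[p]) := by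
    intro z hz
    rw [PadicInt.isUnit_iff]
    exact le_antisymm (PadicInt.norm_le_one _) (not_lt.1 fun h => hz ((PadicInt.norm_int_lt_one_iff_dvd z).1 h))
  obtain ⟨u, hu⟩ := hunit r.den (fun h => hden (Int.natCast_dvd_natCast.1 h))
  obtain ⟨m, hm⟩ := h3
  have hm' : ¬ (p : ℤ) ∣ m := by
    rintro ⟨k, rfl⟩
    exact h4 ⟨k, by rw [hm]; ring⟩
  obtain ⟨s, hs⟩ := h1
  set ρ : ℤ_[p] := (r.num : ℤ_[p]) * ((u⁻¹ : ℤ_[p]ˣ) : ℤ_[p]) with hρ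
  set w : ℤ_[p] := (m : ℤ_[p]) * ((u⁻¹ : ℤ_[p]ˣ) : ℤ_[p]) with hw
  have hwu : IsUnit w := (hunit m hm').mul (Units.isUnit _)
  have hnum : (r.num : ℤ_[p]) = u * x + p * m := by
    rw [hu]
    have := congrArg (Int.cast : ℤ → ℤ_[p]) hm
    push_cast at this ⊢
    linear_combination this
  have hρw : ρ = x + p * w := by
    rw [hρ, hnum, hw]
    linear_combination (x : ℤ_[p]) * u.mul_inv
  obtain ⟨k, hk⟩ := (f.map (Int.castRingHom ℤ_[p])).binomExpansion (x : ℤ_[p]) (p * w)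
  rw [← hρw, Polynomial.derivative_map, Polynomial.eval_intCast_map, Polynomial.eval_intCast_map] at hk
  simp only [Int.cast_id] at hk
  rw [hs] at hk
  have hk2 : (f.map (Int.castRingHom ℤ_[p])).eval ρ =
      p * ((f.derivative.eval x : ℤ) * w + p * (s + k * w^2)) := by
    rw [hk]; simp only [eq_intCast]; push_cast; ring
  have hun : IsUnit (((f.derivative.eval x : ℤ) : ℤ_[p]) * w + p * (s + k * w^2)) := by
    by_contra hcon
    have hA : IsUnit (((f.derivative.eval x : ℤ) : ℤ_[p]) * w) := (hunit _ h2).mul hwu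
    have hB : (p : ℤ_[p]) * (s + k * w^2) ∈ nonunits ℤ_[p] := by
      intro h
      exact PadicInt.prime_p.not_isUnit (isUnit_of_mul_isUnit_left h)
    have hC := IsLocalRing.nonunits_add (a := ((f.derivative.eval x : ℤ) : ℤ_[p]) * w + p * (s + k * w^2))
      (b := - ((p : ℤ_[p]) * (s + k * w^2))) hcon (by rwa [mem_nonunits_iff, IsUnit.neg_iff])
    rw [add_neg_cancel_right] at hC
    exact hC hA
  have hcast : (((f.map (Int.castRingHom ℤ_[p])).eval ρ : ℤ_[p]) : ℚ_[p]) =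
      ((Polynomial.aeval r f : ℚ) : ℚ_[p]) := by
    have e1 : ((ρ : ℤ_[p]) : ℚ_[p]) = (r : ℚ_[p]) := by
      have hd : ((r.den : ℕ) : ℚ_[p]) ≠ 0 := by exact_mod_cast r.den_nz
      have h7 : (ρ : ℤ_[p]) * (u : ℤ_[p]) = r.num := by
        rw [hρ]; linear_combination (r.num : ℤ_[p]) * u.inv_mul
      rw [hu] at h7
      have h8 := congrArg (fun t : ℤ_[p] => (t : ℚ_[p])) h7
      push_cast at h8
      rw [Rat.cast_def r, eq_div_iff hd]
      exact h8
    rw [Polynomial.eval_map, Polynomial.aeval_def]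
    have e2 := Polynomial.hom_eval₂ f (Int.castRingHom ℤ_[p]) (PadicInt.Coe.ringHom (p := p)) ρ
    have e3 := Polynomial.hom_eval₂ f (algebraMap ℤ ℚ) (Rat.castHom ℚ_[p]) r
    refine Eq.trans e2 (Eq.trans ?_ e3.symm)
    rw [RingHom.ext_int ((PadicInt.Coe.ringHom (p := p)).comp (Int.castRingHom ℤ_[p]))
      ((Rat.castHom ℚ_[p]).comp (algebraMap ℤ ℚ))]
    congr 1
  have hnorm : ‖((Polynomial.aeval r f : ℚ) : ℚ_[p])‖ = (p : ℝ)⁻¹ := by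
    rw [← hcast, ← PadicInt.norm_def, hk2, norm_mul, PadicInt.norm_p, PadicInt.isUnit_iff.1 hun, mul_one]
  have hne : (Polynomial.aeval r f : ℚ) ≠ 0 := by
    intro h
    rw [h, Rat.cast_zero, norm_zero] at hnorm
    have : (p : ℝ) ≠ 0 := by exact_mod_cast hp.ne_zero
    exact this (inv_eq_zero.1 hnorm.symm)
  rw [Padic.eq_padicNorm, padicNorm.eq_zpow_of_nonzero hne] at hnorm
  push_cast at hnorm
  rw [← zpow_neg_one] at hnorm
  have := zpow_right_injective₀ (by exact_mod_cast hp.pos : (0:ℝ) < p) (by exact_mod_cast hp.one_lt.ne') hnorm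
  omega

lemma count_dvd (N m : ℕ) (hm : 1 ≤ m) (c : ℤ) :
    ((((Finset.Icc (-N:ℤ) N).filter (fun a => (m:ℤ) ∣ a - c)).card : ℝ) ≤ (2*N+1)/m + 1) ∧
    ((2*N+1 : ℝ)/m - 1 ≤ ((Finset.Icc (-N:ℤ) N).filter (fun a => (m:ℤ) ∣ a - c)).card) := by
  have hm0 : (0:ℤ) < m := by exact_mod_cast hm
  have hmR : (0:ℝ) < m := by exact_mod_cast hm
  have h := Int.Ico_filter_modEq_card (-N:ℤ) (N+1) hm0 c
  have e : (Finset.Icc (-N:ℤ) N).filter (fun a => (m:ℤ) ∣ a - c) =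
      (Finset.Ico (-N:ℤ) (N+1)).filter (fun a => a ≡ c [ZMOD m]) := by
    ext a
    simp only [Finset.mem_filter, Finset.mem_Icc, Finset.mem_Ico, Int.modEq_iff_dvd, Int.lt_add_one_iff]
    rw [dvd_sub_comm]
  rw [← e] at h
  set A := ((Finset.Icc (-N:ℤ) N).filter (fun a => (m:ℤ) ∣ a - c)).card with hA
  set u : ℚ := (((N+1 : ℤ) - c : ℚ)) / (m : ℤ) with hu
  set v : ℚ := (((-N : ℤ) - c : ℚ)) / (m : ℤ) with hv
  have huv : u - v = (2*N+1)/m := by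
    rw [hu, hv, ← sub_div]; push_cast; ring
  have h1 := Int.le_ceil u
  have h2 := Int.ceil_lt_add_one u
  have h3 := Int.le_ceil v
  have h4 := Int.ceil_lt_add_one v
  have hpos : (0:ℚ) ≤ (2*N+1)/m := by positivity
  have hAQ : (A:ℚ) = ((max (⌈u⌉ - ⌈v⌉) 0 : ℤ) : ℚ) := by rw [← h]; simp
  have r1 : (A:ℚ) ≤ (2*N+1)/m + 1 := by
    rw [hAQ]; push_cast
    apply max_le <;> linarith
  have r2 : (2*N+1 : ℚ)/m - 1 ≤ A := by
    rw [hAQ]; push_cast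
    apply le_max_of_le_left; linarith
  constructor
  · have h5 := (Rat.cast_le (K := ℝ)).2 r1
    push_cast at h5
    exact h5
  · have h5 := (Rat.cast_le (K := ℝ)).2 r2
    push_cast at h5
    exact h5

lemma count_pair (N : ℕ) {p q : ℕ} (hp : p.Prime) (hq : q.Prime) (hpq : p ≠ q) (c d : ℤ) :
    (((Finset.Icc (-N:ℤ) N).filter (fun a => (p:ℤ) ∣ a - c ∧ (q:ℤ) ∣ a - d)).card : ℝ)
      ≤ (2*N+1)/(p*q) + 1 := by
  have hco : IsCoprime (p:ℤ) (q:ℤ) := Nat.isCoprime_iff_coprime.2 ((Nat.coprime_primes hp hq).2 hpq)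
  obtain ⟨u, v, huv⟩ := hco
  have h := (count_dvd N (p*q) (Nat.mul_pos hp.pos hq.pos) (c * (v*q) + d * (u*p))).1
  push_cast at h
  refine le_trans ?_ h
  have : (Finset.Icc (-N:ℤ) N).filter (fun a => (p:ℤ) ∣ a - c ∧ (q:ℤ) ∣ a - d) ⊆
    (Finset.Icc (-N:ℤ) N).filter (fun a => (p * q:ℤ) ∣ a - (c * (v*q) + d * (u*p))) := by
    intro a ha
    rw [Finset.mem_filter] at ha ⊢
    refine ⟨ha.1, IsCoprime.mul_dvd ⟨u, v, huv⟩ ?_ ?_⟩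
    · obtain ⟨k, hk⟩ := ha.2.1
      exact ⟨k + c * u - d * u, by linear_combination hk - c * huv⟩
    · obtain ⟨k, hk⟩ := ha.2.2
      exact ⟨k + d * v - c * v, by linear_combination hk - d * huv⟩
  exact_mod_cast Finset.card_le_card this

/-- Variance bound. -/
lemma turan (N z : ℕ) (hz : z^2 ≤ N) (P : Finset ℕ) (hP : ∀ p ∈ P, p.Prime ∧ p ≤ z) (c : ℕ → ℤ)
    (E : ℝ) (hE : E = ∑ p ∈ P, 1/(p:ℝ)) :
    ∑ a ∈ Finset.Icc (-N:ℤ) N, (((P.filter (fun p : ℕ => (p:ℤ) ∣ a - c p)).card : ℝ) - E)^2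
      ≤ 2 * (2*N+1) * (E+1) := by
  set I := Finset.Icc (-N:ℤ) N with hI
  set L : ℝ := 2*N+1 with hL
  have hLc : (I.card : ℝ) = L := by
    rw [hI, Int.card_Icc, hL]
    have : ((N:ℤ) + 1 - -N).toNat = 2*N+1 := by omega
    rw [this]; push_cast; ring
  have hcard : (P.card : ℝ) ≤ z := by
    have : P ⊆ Finset.Icc 1 z := fun p hp => Finset.mem_Icc.2 ⟨(hP p hp).1.pos, (hP p hp).2⟩
    have := Finset.card_le_card this
    rw [Nat.card_Icc] at this
    exact_mod_cast (by omega : P.card ≤ z)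
  have hE0 : 0 ≤ E := by rw [hE]; positivity
  have hP0 : (0:ℝ) ≤ P.card := by positivity
  have hzN : (z:ℝ)^2 ≤ N := by exact_mod_cast hz
  have hz0 : (0:ℝ) ≤ z := by positivity
  have hzz : (z:ℝ) ≤ N := by
    have : z ≤ N := le_trans (Nat.le_self_pow (by norm_num) z) hz
    exact_mod_cast this
  set W : ℤ → ℝ := fun a => ((P.filter (fun p : ℕ => (p:ℤ) ∣ a - c p)).card : ℝ) with hW
  have hWs : ∀ a, W a = ∑ p ∈ P, if (p:ℤ) ∣ a - c p then (1:ℝ) else 0 := by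
    intro a; rw [hW]; simp
  have hcnt : ∀ p : ℕ, ∑ a ∈ I, (if (p:ℤ) ∣ a - c p then (1:ℝ) else 0) =
      (I.filter (fun a => (p:ℤ) ∣ a - c p)).card := by intro p; simp
  have s1 : ∑ a ∈ I, W a = ∑ p ∈ P, ((I.filter (fun a => (p:ℤ) ∣ a - c p)).card : ℝ) := by
    simp_rw [hWs]; rw [Finset.sum_comm]; simp_rw [hcnt]
  have s1l : L * E - P.card ≤ ∑ a ∈ I, W a := by
    rw [s1, hE, Finset.mul_sum, Finset.card_eq_sum_ones]
    push_cast
    rw [← Finset.sum_sub_distrib]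
    apply Finset.sum_le_sum
    intro p hp
    have := (count_dvd N p (hP p hp).1.pos (c p)).2
    rw [mul_one_div]; exact this
  have s2 : ∑ a ∈ I, (W a)^2 = ∑ p ∈ P, ∑ q ∈ P,
      ((I.filter (fun a => (p:ℤ) ∣ a - c p ∧ (q:ℤ) ∣ a - c q)).card : ℝ) := by
    have : ∀ a, (W a)^2 = ∑ p ∈ P, ∑ q ∈ P, (if (p:ℤ) ∣ a - c p ∧ (q:ℤ) ∣ a - c q then (1:ℝ) else 0) := by
      intro a
      rw [sq, hWs, Finset.sum_mul_sum]
      refine Finset.sum_congr rfl fun p _ => Finset.sum_congr rfl fun q _ => ?_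
      rw [ite_and]; split_ifs <;> simp
    simp_rw [this]
    rw [Finset.sum_comm]
    refine Finset.sum_congr rfl fun p _ => ?_
    rw [Finset.sum_comm]
    refine Finset.sum_congr rfl fun q _ => ?_
    simp
  have s2u : ∑ a ∈ I, (W a)^2 ≤ L * E^2 + (P.card:ℝ)^2 + L * E := by
    have key : ∀ p ∈ P, ∀ q ∈ P,
      ((I.filter (fun a => (p:ℤ) ∣ a - c p ∧ (q:ℤ) ∣ a - c q)).card : ℝ) ≤
        (L * (1/(p:ℝ)) * (1/(q:ℝ)) + 1) + (if p = q then L * (1/(p:ℝ)) else 0) := by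
      intro p hp q hq
      by_cases h : p = q
      · subst h
        have := (count_dvd N p (hP p hp).1.pos (c p)).1
        simp only [and_self, if_true]
        have h0 : 0 ≤ L * (1/(p:ℝ)) * (1/(p:ℝ)) := by positivity
        have : ((I.filter (fun a => (p:ℤ) ∣ a - c p)).card : ℝ) ≤ L * (1/(p:ℝ)) + 1 := by
          rw [mul_one_div]; exact this
        linarith
      · have := count_pair N (hP p hp).1 (hP q hq).1 h (c p) (c q)
        rw [if_neg h, add_zero]
        convert this using 2
        rw [mul_one_div, mul_one_div, div_div]
    rw [s2]
    refine le_trans (Finset.sum_le_sum fun p hp => Finset.sum_le_sum fun q hq => key p hp q hq) ?_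
    apply le_of_eq
    simp_rw [Finset.sum_add_distrib]
    congr 1
    · congr 1
      · simp_rw [← Finset.mul_sum]
        rw [← hE, ← Finset.sum_mul, ← Finset.mul_sum, ← hE]; ring
      · simp; ring
    · rw [hE, Finset.mul_sum]
      refine Finset.sum_congr rfl fun p hp => ?_
      simp [hp]
  have expand : ∑ a ∈ I, (W a - E)^2 = ∑ a ∈ I, (W a)^2 - 2 * E * ∑ a ∈ I, W a + L * E^2 := by
    rw [← hLc, Finset.mul_sum, ← nsmul_eq_mul, ← Finset.sum_const, ← Finset.sum_sub_distrib, ← Finset.sum_add_distrib]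
    exact Finset.sum_congr rfl fun a _ => by ring
  change ∑ a ∈ I, (W a - E)^2 ≤ _
  rw [expand]
  have hPP : (P.card:ℝ)^2 ≤ N := le_trans (by gcongr) hzN
  have hPN : (P.card:ℝ) ≤ N := hcard.trans hzz
  have t1 : 2 * E * (L*E - P.card) ≤ 2 * E * ∑ a ∈ I, W a := by gcongr
  have t2 : 2 * E * P.card ≤ 2 * E * N := by gcongr
  have : (0:ℝ) ≤ N := by positivity
  rw [hL] at *
  nlinarith

lemma few_om1 (N z : ℕ) (hz : z^2 ≤ N) (P : Finset ℕ) (hP : ∀ p ∈ P, p.Prime ∧ p ≤ z) (c : ℕ → ℤ)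
    (E : ℝ) (hE : E = ∑ p ∈ P, 1/(p:ℝ)) (hE1 : 1 ≤ E) :
    (((Finset.Icc (-N:ℤ) N).filter (fun a =>
      ((P.filter (fun p : ℕ => (p:ℤ) ∣ a - c p)).card : ℝ) ≤ E/2)).card : ℝ) ≤ 16 * (2*N+1) / E := by
  have h := turan N z hz P hP c E hE
  set S := (Finset.Icc (-N:ℤ) N).filter (fun a =>
      ((P.filter (fun p : ℕ => (p:ℤ) ∣ a - c p)).card : ℝ) ≤ E/2) with hS
  have h1 : (S.card : ℝ) * (E^2/4) ≤ 2 * (2*N+1) * (E+1) := by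
    refine le_trans ?_ h
    refine le_trans ?_ (Finset.sum_le_sum_of_subset_of_nonneg (Finset.filter_subset _ _ : S ⊆ _) fun _ _ _ => sq_nonneg _)
    rw [← nsmul_eq_mul, ← Finset.sum_const]
    apply Finset.sum_le_sum
    intro a ha
    have := (Finset.mem_filter.1 ha).2
    nlinarith
  rw [le_div_iff₀ (by linarith)]
  have h2 : 2 * (2*(N:ℝ)+1) * (E+1) ≤ 2 * (2*(N:ℝ)+1) * (2*E) := by gcongr; linarith
  have h3 : (S.card : ℝ) * E * E ≤ 16 * (2*N+1) * E := by nlinarith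
  exact le_of_mul_le_mul_right h3 (by linarith)

lemma few_om2 (N z : ℕ) (hz : z^2 ≤ N) (P : Finset ℕ) (hP : ∀ p ∈ P, p.Prime ∧ p ≤ z) (c : ℕ → ℤ)
    (E : ℝ) (hE1 : 1 ≤ E) :
    (((Finset.Icc (-N:ℤ) N).filter (fun a =>
      E/4 ≤ ((P.filter (fun p : ℕ => (p:ℤ)^2 ∣ a - c p)).card : ℝ))).card : ℝ) ≤ 12 * (2*N+1) / E := by
  set I := Finset.Icc (-N:ℤ) N with hI
  have hcard : (P.card : ℝ) ≤ z := by
    have : P ⊆ Finset.Icc 1 z := fun p hp => Finset.mem_Icc.2 ⟨(hP p hp).1.pos, (hP p hp).2⟩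
    have := Finset.card_le_card this
    rw [Nat.card_Icc] at this
    exact_mod_cast (by omega : P.card ≤ z)
  have hzz : (z:ℝ) ≤ N := by
    have : z ≤ N := le_trans (Nat.le_self_pow (by norm_num) z) hz
    exact_mod_cast this
  have hzeta : ∑ p ∈ P, 1/(p:ℝ)^2 ≤ 2 := by
    have h1 := sum_le_hasSum P (fun i _ => by positivity) hasSum_zeta_two
    have := Real.pi_lt_d2
    have := Real.pi_pos
    refine h1.trans ?_
    nlinarith
  have hsum : ∑ a ∈ I, ((P.filter (fun p : ℕ => (p:ℤ)^2 ∣ a - c p)).card : ℝ) ≤ 3 * (2*N+1) := by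
    have e : ∑ a ∈ I, ((P.filter (fun p : ℕ => (p:ℤ)^2 ∣ a - c p)).card : ℝ) =
        ∑ p ∈ P, ((I.filter (fun a => (p:ℤ)^2 ∣ a - c p)).card : ℝ) := by
      have h1 : ∀ a : ℤ, ((P.filter (fun p : ℕ => (p:ℤ)^2 ∣ a - c p)).card : ℝ) =
        ∑ p ∈ P, if (p:ℤ)^2 ∣ a - c p then (1:ℝ) else 0 := by intro a; simp
      simp_rw [h1]
      rw [Finset.sum_comm]
      refine Finset.sum_congr rfl fun p _ => by simp
    rw [e]
    have : ∑ p ∈ P, ((I.filter (fun a => (p:ℤ)^2 ∣ a - c p)).card : ℝ) ≤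
        ∑ p ∈ P, ((2*N+1) * (1/(p:ℝ)^2) + 1) := by
      apply Finset.sum_le_sum
      intro p hp
      have := (count_dvd N (p^2) (pow_pos (hP p hp).1.pos 2) (c p)).1
      push_cast at this
      rw [mul_one_div]
      exact this
    refine this.trans ?_
    rw [Finset.sum_add_distrib, ← Finset.mul_sum, Finset.sum_const, nsmul_eq_mul, mul_one]
    have : (2*(N:ℝ)+1) * ∑ p ∈ P, 1/(p:ℝ)^2 ≤ (2*(N:ℝ)+1) * 2 := by gcongr
    have : (0:ℝ) ≤ N := by positivity
    linarith
  set S := I.filter (fun a =>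
      E/4 ≤ ((P.filter (fun p : ℕ => (p:ℤ)^2 ∣ a - c p)).card : ℝ)) with hS
  have h1 : (S.card : ℝ) * (E/4) ≤ 3 * (2*N+1) := by
    refine le_trans ?_ hsum
    refine le_trans ?_ (Finset.sum_le_sum_of_subset_of_nonneg (Finset.filter_subset _ _ : S ⊆ _) fun _ _ _ => by positivity)
    rw [← nsmul_eq_mul, ← Finset.sum_const]
    apply Finset.sum_le_sum
    intro a ha
    exact (Finset.mem_filter.1 ha).2
  rw [le_div_iff₀ (by linarith)]
  linarith

open Classical in
/-- For a fixed denominator, few numerators are bad. -/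
lemma few_bad (M : ℕ) (f : Polynomial ℤ) (N z : ℕ) (hz : z^2 ≤ N) (P : Finset ℕ)
    (hP : ∀ p ∈ P, GoodPrime f p ∧ p ≤ z)
    (E : ℝ) (hE : E = ∑ p ∈ P, 1/(p:ℝ)) (hE1 : 4 * M + 4 ≤ E) (b : ℕ) :
    (((Finset.Icc (-N:ℤ) N).filter (fun a => ∃ r : ℚ, r.num = a ∧ r.den = b ∧
      (sqfreePartRat (Polynomial.aeval r f)).primeFactors.card < M)).card : ℝ) ≤ 28 * (2*N+1) / E := by
  have hP' : ∀ p ∈ P, p.Prime ∧ p ≤ z := fun p hp => ⟨(hP p hp).1.1, (hP p hp).2⟩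
  have hx : ∀ p : ℕ, ∃ x : ℤ, p ∈ P → ((p : ℤ) ^ 2 ∣ f.eval x ∧ ¬ (p : ℤ) ∣ f.derivative.eval x) := by
    intro p
    by_cases h : p ∈ P
    · obtain ⟨x, hx⟩ := (hP p h).1.2
      exact ⟨x, fun _ => hx⟩
    · exact ⟨0, fun h' => absurd h' h⟩
  choose x hx using hx
  have hM0 : (0:ℝ) ≤ M := by positivity
  have h1 := few_om1 N z hz P hP' (fun p => b * x p) E hE (by linarith)
  have h2 := few_om2 N z hz P hP' (fun p => b * x p) E (by linarith)
  set S1 := (Finset.Icc (-N:ℤ) N).filter (fun a =>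
      ((P.filter (fun p : ℕ => (p:ℤ) ∣ a - b * x p)).card : ℝ) ≤ E/2) with hS1
  set S2 := (Finset.Icc (-N:ℤ) N).filter (fun a =>
      E/4 ≤ ((P.filter (fun p : ℕ => (p:ℤ)^2 ∣ a - b * x p)).card : ℝ)) with hS2
  have hsub : ((Finset.Icc (-N:ℤ) N).filter (fun a => ∃ r : ℚ, r.num = a ∧ r.den = b ∧
      (sqfreePartRat (Polynomial.aeval r f)).primeFactors.card < M)) ⊆ S1 ∪ S2 := by
    intro a ha
    rw [Finset.mem_filter] at ha
    obtain ⟨haI, r, hra, hrb, hrM⟩ := ha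
    by_contra hcon
    rw [Finset.mem_union, not_or, hS1, hS2, Finset.mem_filter, Finset.mem_filter] at hcon
    have c1 := not_le.1 fun h => hcon.1 ⟨haI, h⟩
    have c2 := not_le.1 fun h => hcon.2 ⟨haI, h⟩
    set A := P.filter (fun p : ℕ => (p:ℤ) ∣ a - b * x p)
    set B := P.filter (fun p : ℕ => (p:ℤ)^2 ∣ a - b * x p)
    have hAB : A \ B ⊆ (sqfreePartRat (Polynomial.aeval r f)).primeFactors := by
      intro p hp
      rw [Finset.mem_sdiff] at hp
      have hpA := Finset.mem_filter.1 hp.1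
      have hpB : ¬ (p:ℤ)^2 ∣ a - b * x p := fun h => hp.2 (Finset.mem_filter.2 ⟨hpA.1, h⟩)
      apply mem_of_padicValRat (hP' p hpA.1).1
      refine padicVal_eval f r (hP' p hpA.1).1 (x p) (hx p hpA.1).1 (hx p hpA.1).2 ?_ ?_
      · rw [hra, hrb]; exact hpA.2
      · rw [hra, hrb]; exact hpB
    have e1 := Finset.card_le_card hAB
    have e2 := Finset.le_card_sdiff B A
    have e3 : (A.card : ℝ) ≤ M + B.card := by
      exact_mod_cast (by omega : A.card ≤ M + B.card)
    linarith
  have h3 : (((Finset.Icc (-N:ℤ) N).filter (fun a => ∃ r : ℚ, r.num = a ∧ r.den = b ∧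
      (sqfreePartRat (Polynomial.aeval r f)).primeFactors.card < M)).card : ℝ) ≤ S1.card + S2.card := by
    exact_mod_cast (Finset.card_le_card hsub).trans (Finset.card_union_le _ _)
  refine h3.trans ((add_le_add h1 h2).trans (le_of_eq ?_))
  ring

open Classical in
lemma count_total (Q : ℚ → Prop) (N : ℕ) (X : ℝ) (hX : X < N + 1) (T : ℝ)
    (hT : ∀ b : ℕ, (((Finset.Icc (-N:ℤ) N).filter (fun a => ∃ r : ℚ, r.num = a ∧ r.den = b ∧ Q r)).card : ℝ)
      ≤ T) :
    (Set.ncard {r : ℚ | (ratHeight r : ℝ) ≤ X ∧ Q r} : ℝ) ≤ N * T := by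
  set F : Finset (Σ _ : ℕ, ℤ) := (Finset.Icc 1 N).sigma (fun b =>
    (Finset.Icc (-N:ℤ) N).filter (fun a => ∃ r : ℚ, r.num = a ∧ r.den = b ∧ Q r)) with hF
  have h1 : Set.ncard {r : ℚ | (ratHeight r : ℝ) ≤ X ∧ Q r} ≤ F.card := by
    rw [← Set.ncard_coe_finset F]
    apply Set.ncard_le_ncard_of_injOn (fun r : ℚ => (⟨r.den, r.num⟩ : Σ _ : ℕ, ℤ))
    · rintro r ⟨hr, hQ⟩
      have h2 : ratHeight r ≤ N := by
        have : (ratHeight r : ℝ) < N + 1 := hr.trans_lt hX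
        exact Nat.lt_succ_iff.1 (by exact_mod_cast this)
      unfold ratHeight at h2
      have h3 := le_trans (le_max_left _ _) h2
      have h4 := le_trans (le_max_right _ _) h2
      have h5 := r.den_pos
      rw [Finset.mem_coe, hF, Finset.mem_sigma]
      refine ⟨Finset.mem_Icc.2 ⟨h5, h4⟩, Finset.mem_filter.2 ⟨Finset.mem_Icc.2 ?_, r, rfl, rfl, hQ⟩⟩
      dsimp only
      omega
    · rintro r - s - h
      simp only [Sigma.mk.injEq, heq_eq_eq] at h
      exact Rat.ext h.2 h.1
  have h2 : (F.card : ℝ) ≤ N * T := by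
    rw [hF, Finset.card_sigma]
    push_cast
    refine (Finset.sum_le_sum fun b _ => hT b).trans ?_
    simp
  exact le_trans (by exact_mod_cast h1) h2

theorem few_rationals_with_few_prime_factors (M : ℕ) (hM : 1 ≤ M)
    (f : Polynomial ℤ) (hf : 0 < f.natDegree)
    (hirr : Irreducible (f.map (Int.castRingHom ℚ))) :
    ∃ C : ℝ, ∀ X : ℝ, 16 ≤ X →
      (Set.ncard {r : ℚ | (ratHeight r : ℝ) ≤ X ∧ Polynomial.aeval r f ≠ 0 ∧
          (sqfreePartRat (Polynomial.aeval r f)).primeFactors.card < M} : ℝ) ≤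
        C * X ^ 2 / Real.log (Real.log X) := by

  classical
  obtain ⟨c, hc, C, n0, hlow⟩ := good_sum_lower f hirr
  set K : ℝ := max (max ((n0:ℝ)^4) (2 * (c * Real.log 4 + C) / c)) (2 * (4 * M + 4) / c) with hK
  have hK1 : (n0:ℝ)^4 ≤ K := le_trans (le_max_left _ _) (le_max_left _ _)
  have hK2 : 2 * (c * Real.log 4 + C) / c ≤ K := le_trans (le_max_right _ _) (le_max_left _ _)
  have hK3 : 2 * (4 * M + 4) / c ≤ K := le_max_right _ _
  have hK0 : 0 ≤ K := le_trans (by positivity) hK1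
  refine ⟨168 / c + 3 * K, ?_⟩
  intro X hX
  have hX0 : (0:ℝ) < X := by linarith
  set lam := Real.log (Real.log X) with hlam
  have hlogX : 1 < Real.log X := by
    rw [Real.lt_log_iff_exp_lt hX0]
    have := Real.exp_one_lt_d9
    linarith
  have hlam0 : 0 < lam := Real.log_pos hlogX
  set N := ⌊X⌋₊ with hN
  have hNX : (N:ℝ) ≤ X := Nat.floor_le hX0.le
  have hXN : X < N + 1 := Nat.lt_floor_add_one X
  have hN16 : 16 ≤ N := Nat.le_floor (by exact_mod_cast hX)
  have hN1 : (1:ℝ) ≤ N := by exact_mod_cast (by omega : 1 ≤ N)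
  have hNN : (N:ℝ) * (2*N+1) ≤ 3 * X^2 := by nlinarith
  rw [le_div_iff₀ hlam0]
  by_cases hbig : K ≤ lam
  · set z := Nat.sqrt N with hz
    have hzN : z^2 ≤ N := Nat.sqrt_le' N
    have hNz : N < (z+1)^2 := Nat.lt_succ_sqrt' N
    have hz4 : 4 ≤ z := Nat.le_sqrt.2 (by omega)
    have hz4R : (4:ℝ) ≤ z := by exact_mod_cast hz4
    have hXz : X ≤ (z:ℝ)^4 := by
      have h1 : (N:ℝ) + 1 ≤ ((z:ℝ)+1)^2 := by exact_mod_cast hNz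
      have h2 : (z:ℝ) + 1 ≤ z^2 := by nlinarith
      have h3 : ((z:ℝ)+1)^2 ≤ ((z:ℝ)^2)^2 := by gcongr
      nlinarith
    have hlogz : 0 < Real.log z := Real.log_pos (by linarith)
    have hll : lam ≤ Real.log 4 + Real.log (Real.log z) := by
      rw [← Real.log_mul (by norm_num) hlogz.ne']
      apply Real.log_le_log (by linarith)
      have := Real.log_le_log hX0 hXz
      rw [Real.log_pow] at this
      exact_mod_cast this
    have hzn0 : n0 ≤ z := by
      have h1 : lam ≤ X := (Real.log_le_self (by linarith)).trans (Real.log_le_self hX0.le)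
      have h2 : (n0:ℝ)^4 ≤ (z:ℝ)^4 := by linarith
      have h3 : n0^4 ≤ z^4 := by exact_mod_cast h2
      exact (Nat.pow_le_pow_iff_left (by norm_num)).1 h3
    have hE := hlow z hzn0
    set P := (Finset.range (z+1)).filter (GoodPrime f) with hP
    set E : ℝ := ∑ p ∈ P, (1/(p:ℝ)) with hEdef
    have hPP : ∀ p ∈ P, GoodPrime f p ∧ p ≤ z := by
      intro p hp
      have := Finset.mem_filter.1 hp
      exact ⟨this.2, Nat.lt_succ_iff.1 (Finset.mem_range.1 this.1)⟩
    have hcl : c * lam ≤ c * (Real.log 4 + Real.log (Real.log z)) := by gcongr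
    have hK2' : 2 * (c * Real.log 4 + C) ≤ lam * c := (div_le_iff₀ hc).1 (hK2.trans hbig)
    have hK3' : 2 * (4 * M + 4) ≤ lam * c := (div_le_iff₀ hc).1 (hK3.trans hbig)
    have hElam : c / 2 * lam ≤ E := by linarith
    have hE4 : 4 * (M:ℝ) + 4 ≤ E := by linarith
    have hE0 : 0 < E := by
      have : (0:ℝ) ≤ M := by positivity
      linarith
    have htot := count_total (fun r => Polynomial.aeval r f ≠ 0 ∧
          (sqfreePartRat (Polynomial.aeval r f)).primeFactors.card < M) N X hXN (28 * (2*N+1) / E) (by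
      intro b
      refine le_trans ?_ (few_bad M f N z hzN P hPP E hEdef hE4 b)
      have : ((Finset.Icc (-N:ℤ) N).filter (fun a => ∃ r : ℚ, r.num = a ∧ r.den = b ∧
          (Polynomial.aeval r f ≠ 0 ∧ (sqfreePartRat (Polynomial.aeval r f)).primeFactors.card < M))) ⊆
        ((Finset.Icc (-N:ℤ) N).filter (fun a => ∃ r : ℚ, r.num = a ∧ r.den = b ∧
          (sqfreePartRat (Polynomial.aeval r f)).primeFactors.card < M)) := by
        intro a ha
        rw [Finset.mem_filter] at ha ⊢
        obtain ⟨h1, r, h2, h3, h4, h5⟩ := ha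
        exact ⟨h1, r, h2, h3, h5⟩
      exact_mod_cast Finset.card_le_card this)
    refine le_trans (mul_le_mul_of_nonneg_right htot hlam0.le) ?_
    have h1 : (N:ℝ) * (28 * (2*N+1) / E) * lam = 28 * (N * (2*N+1)) * (lam / E) := by ring
    have h2 : lam / E ≤ 2 / c := by
      rw [div_le_div_iff₀ hE0 hc]; linarith
    have h3 : 28 * ((N:ℝ) * (2*N+1)) * (lam / E) ≤ 28 * (3 * X^2) * (2 / c) := by gcongr
    rw [h1]
    refine h3.trans ?_
    have h4 : 28 * (3 * X^2) * (2 / c) = 168 / c * X^2 := by ring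
    have h5 : 0 ≤ 3 * K * X^2 := by positivity
    rw [h4]; linarith
  · have hlK : lam ≤ K := (not_le.1 hbig).le
    have htot := count_total (fun r => Polynomial.aeval r f ≠ 0 ∧
          (sqfreePartRat (Polynomial.aeval r f)).primeFactors.card < M) N X hXN (2*N+1) (by
      intro b
      have h1 := Finset.card_le_card (Finset.filter_subset (fun a => ∃ r : ℚ, r.num = a ∧ r.den = b ∧
          (Polynomial.aeval r f ≠ 0 ∧ (sqfreePartRat (Polynomial.aeval r f)).primeFactors.card < M))
          (Finset.Icc (-N:ℤ) N))
      have h2 : (Finset.Icc (-N:ℤ) N).card = 2*N+1 := by rw [Int.card_Icc]; omega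
      rw [h2] at h1
      exact_mod_cast h1)
    have h3 := htot.trans hNN
    refine le_trans (mul_le_mul h3 hlK hlam0.le (by positivity)) ?_
    have h5 : 0 ≤ 168 / c * X^2 := by positivity
    linarith
end

section
/- There exist constants c₁, c₂ > 0 such that for all sufficiently large X, c₁ · X² · log log X ≤ Σ_{r ∈ ℚ, h(r) ≤ X} ω(den(r)) ≤ c₂ · X² · log log X, where the sum is over all rational numbers r of height at most X and den(r) denotes the (positive) denominator of r in lowest terms. -/
lemma aux_loglog_le (N : ℕ) (hN : 2 ≤ N) :
    Real.log (Real.log ((N : ℝ) + 1)) ≤ 2 * ∑ p ∈ Nat.primesLE N, (1 / (p : ℝ)) := by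
  let f : ℕ →* ℝ := ⟨⟨fun n => (n : ℝ)⁻¹, by simp⟩, by intros; simp [mul_comm]⟩
  have hf : ∀ n, f n = (n : ℝ)⁻¹ := fun _ => rfl
  have h := (EulerProduct.summable_and_hasSum_smoothNumbers_prod_primesBelow_geometric
    (f := f) (by
      intro p hp
      rw [hf, norm_inv, Real.norm_natCast]
      exact inv_lt_one_of_one_lt₀ (by exact_mod_cast hp.one_lt)) (N + 1)).2
  have h1 : HasSum ((Nat.smoothNumbers (N + 1)).indicator (fun n => f n))
    (∏ p ∈ (N + 1).primesBelow, (1 - f p)⁻¹) := hasSum_subtype_iff_indicator.1 h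
  have h2 := sum_le_hasSum (Finset.Icc 1 N) (fun i _ => by
    apply Set.indicator_nonneg; intro x _; rw [hf]; positivity) h1
  have h3 : ∑ i ∈ Finset.Icc 1 N, (Nat.smoothNumbers (N + 1)).indicator (fun n => f n) i
      = (harmonic N : ℝ) := by
    rw [harmonic_eq_sum_Icc]
    push_cast
    apply Finset.sum_congr rfl
    intro i hi
    rw [Finset.mem_Icc] at hi
    rw [Set.indicator_of_mem, hf]
    rw [Nat.mem_smoothNumbers']
    intro p _ hpi
    have := Nat.le_of_dvd (by omega) hpi
    omega
  rw [h3] at h2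
  have h4 := log_add_one_le_harmonic N
  push_cast at h4
  have h5 : ∏ p ∈ (N + 1).primesBelow, (1 - f p)⁻¹ ≤
      Real.exp (2 * ∑ p ∈ Nat.primesLE N, (1 / (p : ℝ))) := by
    rw [Finset.mul_sum, Real.exp_sum]
    apply Finset.prod_le_prod
    · intro p hp
      have hp := Nat.prime_of_mem_primesBelow hp
      have : (p : ℝ)⁻¹ ≤ 1 := inv_le_one_of_one_le₀ (by exact_mod_cast hp.one_lt.le)
      rw [hf]
      exact inv_nonneg.2 (by linarith)
    · intro p hp
      have hp := Nat.prime_of_mem_primesBelow hp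
      have hp2 : (2 : ℝ) ≤ p := by exact_mod_cast hp.two_le
      rw [hf, one_div]
      set x := (p : ℝ)⁻¹ with hx
      have hx2 : x ≤ 1 / 2 := by
        rw [hx, one_div]; exact inv_anti₀ (by norm_num) hp2
      have hx0 : 0 ≤ x := by positivity
      have he := Real.add_one_le_exp (2 * x)
      refine le_trans ?_ he
      rw [inv_le_iff_one_le_mul₀ (by linarith)]
      nlinarith
  have hlog : 0 < Real.log ((N : ℝ) + 1) := by
    apply Real.log_pos
    have : (2 : ℝ) ≤ N := by exact_mod_cast hN
    linarith
  rw [Real.log_le_iff_le_exp hlog]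
  linarith

lemma aux_dyadic (K : ℕ) :
    ∑ p ∈ Nat.primesLE (2 ^ (K + 1)), (1 / (p : ℝ)) ≤ 1 / 2 + 4 * (harmonic K : ℝ) := by
  induction K with
  | zero =>
    have : Nat.primesLE 2 = {2} := by decide
    simp [this]
  | succ K ih =>
    have hsub : Nat.primesLE (2 ^ (K + 1)) ⊆ Nat.primesLE (2 ^ (K + 1 + 1)) := by
      intro p hp
      rw [Nat.mem_primesLE] at *
      exact ⟨hp.1.trans (Nat.pow_le_pow_right (by norm_num) (by omega)), hp.2⟩
    rw [← Finset.sum_sdiff hsub, harmonic_succ]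
    have hl2 : 0 < Real.log 2 := Real.log_pos (by norm_num)
    have key : ∑ p ∈ Nat.primesLE (2 ^ (K + 1 + 1)) \ Nat.primesLE (2 ^ (K + 1)), (1 / (p : ℝ))
        ≤ 4 * ((K : ℝ) + 1)⁻¹ := by
      have h1 : ∑ p ∈ Nat.primesLE (2 ^ (K + 1 + 1)) \ Nat.primesLE (2 ^ (K + 1)), (1 / (p : ℝ))
        ≤ ∑ p ∈ Nat.primesLE (2 ^ (K + 1 + 1)) \ Nat.primesLE (2 ^ (K + 1)),
          Real.log p * (1 / (2 ^ (K + 1) * ((K + 1) * Real.log 2))) := by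
        apply Finset.sum_le_sum
        intro p hp
        rw [Finset.mem_sdiff, Nat.mem_primesLE, Nat.mem_primesLE] at hp
        have hlt : 2 ^ (K + 1) < p := by
          by_contra hcon
          exact hp.2 ⟨not_lt.1 hcon, hp.1.2⟩
        have hlt' : (2 : ℝ) ^ (K + 1) < p := by exact_mod_cast hlt
        have hpos : (0 : ℝ) < 2 ^ (K + 1) := by positivity
        have hlog : (K + 1) * Real.log 2 ≤ Real.log p := by
          have := Real.log_le_log hpos hlt'.le
          rw [Real.log_pow] at this
          push_cast at this
          exact this
        have hp0 : (0 : ℝ) < p := hpos.trans hlt'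
        rw [mul_one_div, div_le_div_iff₀ hp0 (by positivity), one_mul, mul_comm (Real.log p)]
        exact mul_le_mul hlt'.le hlog (by positivity) hp0.le
      rw [← Finset.sum_mul] at h1
      have h2 : ∑ p ∈ Nat.primesLE (2 ^ (K + 1 + 1)) \ Nat.primesLE (2 ^ (K + 1)), Real.log p
          ≤ Chebyshev.theta ((2 ^ (K + 1 + 1) : ℕ)) := by
        rw [Chebyshev.theta_eq_sum_primesLE_log]
        apply Finset.sum_le_sum_of_subset_of_nonneg Finset.sdiff_subset
        intro p _ _
        exact Real.log_natCast_nonneg p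
      have h3 := Chebyshev.theta_le_log4_mul_x (x := ((2 ^ (K + 1 + 1) : ℕ) : ℝ)) (by positivity)
      have h4 : Real.log 4 = 2 * Real.log 2 := by
        rw [show (4 : ℝ) = 2 ^ 2 by norm_num, Real.log_pow]; norm_num
      refine h1.trans ((mul_le_mul_of_nonneg_right (h2.trans h3) (by positivity)).trans ?_)
      rw [h4]
      apply le_of_eq
      push_cast
      have : (K : ℝ) + 1 ≠ 0 := by positivity
      field_simp
      ring
    push_cast
    linarith

lemma aux_sum_sq' (k : ℕ) (hk : 1 ≤ k) :
    ∑ q ∈ Nat.primesLE (2 * k), (1 / (q : ℝ) ^ 2) ≤ (1 / 2 : ℝ) - 1 / (4 * (k : ℝ)) := by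
  induction k, hk using Nat.le_induction with
  | base =>
    have : Nat.primesLE 2 = {2} := by decide
    norm_num [this]
  | succ k hk ih =>
    have hnp : ¬ Nat.Prime (2 * k + 1 + 1) := by
      intro h
      have := (Nat.Prime.even_iff h).1 ⟨k + 1, by ring⟩
      omega
    rw [Nat.primesLE_eq_filter_range, Finset.sum_filter] at *
    rw [show 2 * (k + 1) + 1 = 2 * k + 1 + 1 + 1 by ring, Finset.sum_range_succ,
      Finset.sum_range_succ, if_neg hnp]
    have hk0 : (1 : ℝ) ≤ k := by exact_mod_cast hk
    have h1 : (if Nat.Prime (2 * k + 1) then 1 / (((2 * k + 1 : ℕ) : ℝ)) ^ 2 else 0)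
        ≤ 1 / (4 * (k : ℝ)) - 1 / (4 * ((k : ℝ) + 1)) := by
      have h2 : 1 / (((2 * k + 1 : ℕ) : ℝ)) ^ 2 ≤ 1 / (4 * (k : ℝ)) - 1 / (4 * ((k : ℝ) + 1)) := by
        have : 1 / (4 * (k : ℝ)) - 1 / (4 * ((k : ℝ) + 1)) = 1 / (4 * k * (k + 1)) := by
          field_simp; ring
        rw [this]
        push_cast
        apply one_div_le_one_div_of_le (by positivity)
        nlinarith
      split_ifs
      · exact h2
      · exact le_trans (by positivity) h2
    push_cast at *
    linarith

lemma aux_sum_sq (N : ℕ) : ∑ q ∈ Nat.primesLE N, (1 / (q : ℝ) ^ 2) ≤ 1 / 2 := by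
  have h := aux_sum_sq' (N + 1) (by omega)
  have h2 : ∑ q ∈ Nat.primesLE N, (1 / (q : ℝ) ^ 2) ≤
      ∑ q ∈ Nat.primesLE (2 * (N + 1)), (1 / (q : ℝ) ^ 2) := by
    apply Finset.sum_le_sum_of_subset_of_nonneg
    · intro p hp
      rw [Nat.mem_primesLE] at *
      exact ⟨by omega, hp.2⟩
    · intros; positivity
  have : 0 ≤ 1 / (4 * ((N + 1 : ℕ) : ℝ)) := by positivity
  linarith

lemma aux_card_dvd (N p : ℕ) : ((Finset.Ioc 0 N).filter (fun x => p ∣ x)).card = N / p :=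
  Nat.Ioc_filter_dvd_card_eq_div N p

lemma aux_pairs (N p : ℕ) (hp : p.Prime) (hp3 : 3 ≤ p) (hpN : p ≤ N) :
    (N : ℝ) ^ 2 / 12 * (1 / p) ≤
      (((Finset.Ioc 0 N ×ˢ Finset.Ioc 0 N).filter
        (fun x => Nat.Coprime x.1 x.2 ∧ p ∣ x.2)).card : ℝ) := by
  set M := N / p with hM
  set A := Finset.Ioc 0 N ×ˢ Finset.Ioc 0 M with hA
  set G := A.filter (fun x => Nat.Coprime x.1 (p * x.2)) with hG
  have hp0 : (0 : ℝ) < p := by exact_mod_cast hp.pos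
  have hGle : G.card ≤ ((Finset.Ioc 0 N ×ˢ Finset.Ioc 0 N).filter
        (fun x => Nat.Coprime x.1 x.2 ∧ p ∣ x.2)).card := by
    apply Finset.card_le_card_of_injOn (fun x => (x.1, p * x.2))
    · intro x hx
      simp only [hG, hA, Finset.coe_filter, Finset.mem_product, Finset.mem_Ioc,
        Set.mem_ofPred_eq] at hx ⊢
      obtain ⟨⟨h1, h2, h3⟩, h4⟩ := hx
      refine ⟨⟨h1, Nat.mul_pos hp.pos h2, ?_⟩, h4, dvd_mul_right _ _⟩
      exact (Nat.mul_le_mul_left p h3).trans (Nat.mul_div_le N p)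
    · intro x _ y _ hxy
      simp only [Prod.mk.injEq] at hxy
      exact Prod.ext hxy.1 (Nat.eq_of_mul_eq_mul_left hp.pos hxy.2)
  have hcov : A ⊆ G ∪ (((Finset.Ioc 0 N).filter (fun x => p ∣ x)) ×ˢ Finset.Ioc 0 M ∪
      (Nat.primesLE N).biUnion (fun q => ((Finset.Ioc 0 N).filter (fun x => q ∣ x)) ×ˢ
        ((Finset.Ioc 0 M).filter (fun x => q ∣ x)))) := by
    intro x hx
    have hx' := hx
    simp only [hA, Finset.mem_product, Finset.mem_Ioc] at hx'
    by_cases hc : Nat.Coprime x.1 (p * x.2)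
    · exact Finset.mem_union_left _ (Finset.mem_filter.2 ⟨hx, hc⟩)
    apply Finset.mem_union_right
    obtain ⟨q, hq, hq1, hq2⟩ := Nat.Prime.not_coprime_iff_dvd.1 hc
    by_cases hqp : q = p
    · subst hqp
      apply Finset.mem_union_left
      simp only [Finset.mem_product, Finset.mem_filter, Finset.mem_Ioc]
      exact ⟨⟨hx'.1, hq1⟩, hx'.2⟩
    · apply Finset.mem_union_right
      have hq3 : q ∣ x.2 := by
        rcases (Nat.Prime.dvd_mul hq).1 hq2 with h | h
        · exact absurd ((Nat.prime_dvd_prime_iff_eq hq hp).1 h) hqp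
        · exact h
      simp only [Finset.mem_biUnion, Finset.mem_product, Finset.mem_filter, Finset.mem_Ioc,
        Nat.mem_primesLE]
      exact ⟨q, ⟨(Nat.le_of_dvd hx'.1.1 hq1).trans hx'.1.2, hq⟩, ⟨hx'.1, hq1⟩, hx'.2, hq3⟩
  have hcard : N * M ≤ G.card + (M * M + ∑ q ∈ Nat.primesLE N, (N / q) * (M / q)) := by
    calc N * M = A.card := by simp [hA]
      _ ≤ _ := Finset.card_le_card hcov
      _ ≤ _ := Finset.card_union_le _ _
      _ ≤ _ := by
        apply Nat.add_le_add_left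
        refine (Finset.card_union_le _ _).trans (Nat.add_le_add ?_ ?_)
        · rw [Finset.card_product, aux_card_dvd]; simp [hM]
        · refine Finset.card_biUnion_le.trans (Finset.sum_le_sum ?_)
          intro q _
          rw [Finset.card_product, aux_card_dvd, aux_card_dvd]
  have hcardR : (N : ℝ) * M ≤ G.card + (M * M + ∑ q ∈ Nat.primesLE N,
      ((N / q : ℕ) : ℝ) * ((M / q : ℕ) : ℝ)) := by exact_mod_cast hcard
  have hsum : ∑ q ∈ Nat.primesLE N, ((N / q : ℕ) : ℝ) * ((M / q : ℕ) : ℝ) ≤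
      N * M * (1 / 2) := by
    calc _ ≤ ∑ q ∈ Nat.primesLE N, (N * M : ℝ) * (1 / (q : ℝ) ^ 2) := by
          apply Finset.sum_le_sum
          intro q _
          calc ((N / q : ℕ) : ℝ) * ((M / q : ℕ) : ℝ) ≤ (N / q : ℝ) * (M / q : ℝ) := by
                gcongr <;> exact Nat.cast_div_le
            _ = _ := by ring
      _ ≤ _ := by
          rw [← Finset.mul_sum]
          exact mul_le_mul_of_nonneg_left (aux_sum_sq N) (by positivity)
  have hM1 : (M : ℝ) ≤ N / 3 := by
    have : (M : ℝ) ≤ N / p := Nat.cast_div_le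
    refine this.trans ?_
    have : (3 : ℝ) ≤ p := by exact_mod_cast hp3
    gcongr
  have hM2 : (N : ℝ) / (2 * p) ≤ M := by
    have h1 : 1 ≤ M := (Nat.one_le_div_iff hp.pos).2 hpN
    have h2 : N < p * (M + 1) := Nat.lt_mul_div_succ N hp.pos
    have h3 : N ≤ M * (2 * p) := by nlinarith
    rw [div_le_iff₀ (by positivity)]
    exact_mod_cast h3
  have hGR : (G.card : ℝ) ≤ _ := Nat.cast_le.2 hGle
  refine le_trans ?_ hGR
  have hM0 : (0 : ℝ) ≤ M := by positivity
  have hN0 : (0 : ℝ) ≤ N := by positivity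
  have e1 : (M : ℝ) * M ≤ N / 3 * M := mul_le_mul_of_nonneg_right hM1 hM0
  have e2 : (N : ℝ) * (N / (2 * p)) ≤ N * M := mul_le_mul_of_nonneg_left hM2 hN0
  have e3 : (N : ℝ) ^ 2 / 12 * (1 / p) = (N * (N / (2 * p))) / 6 := by field_simp; ring
  rw [e3]
  linarith

lemma aux_omega (N b : ℕ) (hb : 0 < b) (hbN : b ≤ N) :
    (b.primeFactors.card : ℝ) = ∑ p ∈ Nat.primesLE N, if p ∣ b then (1 : ℝ) else 0 := by
  rw [← Finset.sum_filter, Finset.sum_const, nsmul_eq_mul, mul_one]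
  congr 2
  ext p
  simp only [Nat.mem_primeFactors, Finset.mem_filter, Nat.mem_primesLE]
  constructor
  · rintro ⟨h1, h2, _⟩
    exact ⟨⟨(Nat.le_of_dvd hb h2).trans hbN, h1⟩, h2⟩
  · rintro ⟨⟨_, h1⟩, h2⟩
    exact ⟨h1, h2, hb.ne'⟩

lemma aux_upper (N : ℕ) (hN : 1 ≤ N) (T : Finset ℚ) (hT : ∀ r, r ∈ T ↔ ratHeight r ≤ N) :
    ∑ r ∈ T, (r.den.primeFactors.card : ℝ) ≤
      3 * (N : ℝ) ^ 2 * ∑ p ∈ Nat.primesLE N, (1 / (p : ℝ)) := by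
  have hinj : Set.InjOn (fun r : ℚ => (r.num, r.den)) (T : Set ℚ) := by
    intro r _ s _ h
    simp only [Prod.mk.injEq] at h
    exact Rat.ext h.1 h.2
  have h1 : ∑ r ∈ T, (r.den.primeFactors.card : ℝ) =
      ∑ x ∈ T.image (fun r : ℚ => (r.num, r.den)), (x.2.primeFactors.card : ℝ) := by
    rw [Finset.sum_image hinj]
  have hsub : T.image (fun r : ℚ => (r.num, r.den)) ⊆
      Finset.Icc (-(N : ℤ)) N ×ˢ Finset.Ioc 0 N := by
    intro x hx
    obtain ⟨r, hr, rfl⟩ := Finset.mem_image.1 hx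
    have hr := (hT r).1 hr
    have hd := r.den_pos
    simp only [ratHeight] at hr
    simp only [Finset.mem_product, Finset.mem_Icc, Finset.mem_Ioc]
    omega
  rw [h1]
  refine (Finset.sum_le_sum_of_subset_of_nonneg hsub (fun _ _ _ => by positivity)).trans ?_
  rw [Finset.sum_product]
  simp only []
  rw [Finset.sum_const, Int.card_Icc, nsmul_eq_mul]
  have h2 : ∑ b ∈ Finset.Ioc 0 N, (b.primeFactors.card : ℝ) ≤
      N * ∑ p ∈ Nat.primesLE N, (1 / (p : ℝ)) := by
    calc _ = ∑ b ∈ Finset.Ioc 0 N, ∑ p ∈ Nat.primesLE N, (if p ∣ b then (1 : ℝ) else 0) := by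
          apply Finset.sum_congr rfl
          intro b hb
          rw [Finset.mem_Ioc] at hb
          exact aux_omega N b hb.1 hb.2
      _ = ∑ p ∈ Nat.primesLE N, ((N / p : ℕ) : ℝ) := by
          rw [Finset.sum_comm]
          apply Finset.sum_congr rfl
          intro p _
          rw [← Finset.sum_filter, Finset.sum_const, aux_card_dvd]
          simp
      _ ≤ _ := by
          rw [Finset.mul_sum]
          apply Finset.sum_le_sum
          intro p _
          rw [mul_one_div]
          exact Nat.cast_div_le
  have h3 : (((((N : ℤ) + 1 - -(N : ℤ)).toNat : ℕ)) : ℝ) ≤ 3 * N := by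
    have : ((N : ℤ) + 1 - -(N : ℤ)).toNat ≤ 3 * N := by omega
    exact_mod_cast this
  calc _ ≤ (3 * (N : ℝ)) * (N * ∑ p ∈ Nat.primesLE N, (1 / (p : ℝ))) :=
        mul_le_mul h3 h2 (by positivity) (by positivity)
    _ = _ := by ring

lemma aux_lower (N : ℕ) (T : Finset ℚ) (hT : ∀ r, r ∈ T ↔ ratHeight r ≤ N) :
    (N : ℝ) ^ 2 / 12 * (∑ p ∈ Nat.primesLE N, (1 / (p : ℝ)) - 1 / 2) ≤
    ∑ r ∈ T, (r.den.primeFactors.card : ℝ) := by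
  set C := (Finset.Ioc 0 N ×ˢ Finset.Ioc 0 N).filter (fun x => Nat.Coprime x.1 x.2) with hC
  have hnd : ∀ x ∈ C, (((x.1 : ℕ) : ℚ) / ((x.2 : ℕ) : ℚ)).num = x.1 ∧
      (((x.1 : ℕ) : ℚ) / ((x.2 : ℕ) : ℚ)).den = x.2 := by
    intro x hx
    simp only [hC, Finset.mem_filter, Finset.mem_product, Finset.mem_Ioc] at hx
    have h1 := Rat.num_div_eq_of_coprime (a := (x.1 : ℤ)) (b := (x.2 : ℤ))
      (by exact_mod_cast hx.1.2.1) (by simpa using hx.2)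
    have h2 := Rat.den_div_eq_of_coprime (a := (x.1 : ℤ)) (b := (x.2 : ℤ))
      (by exact_mod_cast hx.1.2.1) (by simpa using hx.2)
    push_cast at h1 h2
    exact ⟨h1, by exact_mod_cast h2⟩
  have hinj : Set.InjOn (fun x : ℕ × ℕ => (x.1 : ℚ) / (x.2 : ℚ)) (C : Set (ℕ × ℕ)) := by
    intro x hx y hy h
    have hx := hnd x hx
    have hy := hnd y hy
    simp only at h
    rw [h] at hx
    exact Prod.ext (by have := hx.1.symm.trans hy.1; exact_mod_cast this)
      (hx.2.symm.trans hy.2)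
  have hsub : C.image (fun x : ℕ × ℕ => (x.1 : ℚ) / (x.2 : ℚ)) ⊆ T := by
    intro r hr
    obtain ⟨x, hx, rfl⟩ := Finset.mem_image.1 hr
    have h := hnd x hx
    rw [hT, ratHeight, h.1, h.2]
    simp only [hC, Finset.mem_filter, Finset.mem_product, Finset.mem_Ioc] at hx
    simp only [Int.natAbs_natCast]
    omega
  refine le_trans ?_ (Finset.sum_le_sum_of_subset_of_nonneg hsub (fun _ _ _ => by positivity))
  rw [Finset.sum_image hinj]
  have h1 : ∑ x ∈ C, ((((x.1 : ℚ) / (x.2 : ℚ)).den.primeFactors.card : ℕ) : ℝ) =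
      ∑ p ∈ Nat.primesLE N, ((C.filter (fun x => p ∣ x.2)).card : ℝ) := by
    calc _ = ∑ x ∈ C, ∑ p ∈ Nat.primesLE N, (if p ∣ x.2 then (1 : ℝ) else 0) := by
          apply Finset.sum_congr rfl
          intro x hx
          rw [(hnd x hx).2]
          simp only [hC, Finset.mem_filter, Finset.mem_product, Finset.mem_Ioc] at hx
          exact aux_omega N x.2 hx.1.2.1 hx.1.2.2
      _ = _ := by
          rw [Finset.sum_comm]
          apply Finset.sum_congr rfl
          intro p _
          rw [← Finset.sum_filter, Finset.sum_const]
          simp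
  rw [h1]
  have h2 : ∑ p ∈ Nat.primesLE N, (N : ℝ) ^ 2 / 12 * (1 / (p : ℝ) - if p = 2 then 1 / 2 else 0) ≤
      ∑ p ∈ Nat.primesLE N, ((C.filter (fun x => p ∣ x.2)).card : ℝ) := by
    apply Finset.sum_le_sum
    intro p hp
    rw [Nat.mem_primesLE] at hp
    by_cases h : p = 2
    · subst h; norm_num
    · have := hp.2.two_le
      have h3 := aux_pairs N p hp.2 (by omega) hp.1
      rw [if_neg h, sub_zero, hC, Finset.filter_filter]
      exact h3
  refine le_trans ?_ h2
  rw [← Finset.mul_sum, Finset.sum_sub_distrib, Finset.sum_ite_eq']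
  gcongr
  split_ifs <;> norm_num

theorem sum_omega_denominator_asymptotics :
    ∃ c₁ c₂ : ℝ, 0 < c₁ ∧ 0 < c₂ ∧ ∃ X₀ : ℝ, ∀ X : ℝ, X₀ ≤ X →
      c₁ * X ^ 2 * Real.log (Real.log X) ≤
        (∑ᶠ r ∈ {r : ℚ | (ratHeight r : ℝ) ≤ X}, (r.den.primeFactors.card : ℝ)) ∧
      (∑ᶠ r ∈ {r : ℚ | (ratHeight r : ℝ) ≤ X}, (r.den.primeFactors.card : ℝ)) ≤
        c₂ * X ^ 2 * Real.log (Real.log X) := by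
  refine ⟨1 / 192, 42, by norm_num, by norm_num, Real.exp (Real.exp 2), ?_⟩
  intro X hX
  have hE : (3 : ℝ) ≤ Real.exp 2 := by have := Real.add_one_le_exp (2 : ℝ); linarith
  have hEE : (4 : ℝ) ≤ Real.exp (Real.exp 2) := by
    have := Real.add_one_le_exp (Real.exp 2); linarith
  have hX4 : 4 ≤ X := hEE.trans hX
  have hX0 : 0 < X := by linarith
  have hlogX : Real.exp 2 ≤ Real.log X := (Real.le_log_iff_exp_le hX0).2 hX
  have hlog0 : 0 < Real.log X := by linarith
  have hLL : 2 ≤ Real.log (Real.log X) := (Real.le_log_iff_exp_le hlog0).2 hlogX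
  set L := Real.log (Real.log X) with hL
  set N := ⌊X⌋₊ with hN
  have hNX : (N : ℝ) ≤ X := Nat.floor_le hX0.le
  have hXN : X < N + 1 := Nat.lt_floor_add_one X
  have hN4 : 4 ≤ N := Nat.le_floor (by exact_mod_cast hX4)
  have hNR : (4 : ℝ) ≤ N := by exact_mod_cast hN4
  have hfin : {r : ℚ | (ratHeight r : ℝ) ≤ X}.Finite := by
    apply ((Finset.Icc (-(N : ℤ)) N ×ˢ Finset.Icc 0 N).finite_toSet.image
      (fun x : ℤ × ℕ => (x.1 : ℚ) / (x.2 : ℚ))).subset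
    intro r hr
    have hr : ratHeight r ≤ N := Nat.le_floor hr
    simp only [ratHeight] at hr
    refine ⟨(r.num, r.den), ?_, Rat.num_div_den r⟩
    simp only [Finset.coe_product, Set.mem_prod, Finset.mem_coe, Finset.mem_Icc]
    omega
  rw [finsum_mem_eq_finite_toFinset_sum _ hfin]
  have hT : ∀ r, r ∈ hfin.toFinset ↔ ratHeight r ≤ N := by
    intro r
    rw [Set.Finite.mem_toFinset]
    exact (Nat.le_floor_iff hX0.le).symm
  have hlow := aux_lower N _ hT
  have hup := aux_upper N (by omega) _ hT
  have hP1 := aux_loglog_le N (by omega)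
  set P := ∑ p ∈ Nat.primesLE N, (1 / (p : ℝ)) with hP
  constructor
  · refine le_trans ?_ hlow
    have h1 : L ≤ Real.log (Real.log ((N : ℝ) + 1)) :=
      Real.log_le_log hlog0 (Real.log_le_log hX0 hXN.le)
    have h2 : L / 4 ≤ P - 1 / 2 := by linarith
    have h3 : X ^ 2 / 4 ≤ (N : ℝ) ^ 2 := by nlinarith
    calc 1 / 192 * X ^ 2 * L = (X ^ 2 / 4) / 12 * (L / 4) := by ring
      _ ≤ (N : ℝ) ^ 2 / 12 * (P - 1 / 2) := by gcongr
  · refine hup.trans ?_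
    have hPle : P ≤ 14 * L := by
      set K := Nat.log 2 N with hK
      have hK1 : 1 ≤ K := (Nat.le_log_iff_pow_le (by norm_num) (by omega)).2 (by omega)
      have h1 : P ≤ ∑ p ∈ Nat.primesLE (2 ^ (K + 1)), (1 / (p : ℝ)) := by
        apply Finset.sum_le_sum_of_subset_of_nonneg
        · intro p hp
          rw [Nat.mem_primesLE] at *
          exact ⟨hp.1.trans (Nat.lt_pow_succ_log_self (by norm_num) N).le, hp.2⟩
        · intros; positivity
      have h2 := aux_dyadic K
      have h3 := harmonic_le_one_add_log K
      have hKX : (2 : ℝ) ^ K ≤ X := by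
        have : 2 ^ K ≤ N := Nat.pow_log_le_self 2 (by omega)
        refine le_trans ?_ hNX
        exact_mod_cast this
      have h4 : (K : ℝ) * Real.log 2 ≤ Real.log X := by
        rw [← Real.log_pow]
        exact Real.log_le_log (by positivity) hKX
      have h5 : (K : ℝ) ≤ 2 * Real.log X := by
        have := Real.log_two_gt_d9
        have hK0 : (0 : ℝ) ≤ K := by positivity
        nlinarith
      have h6 : Real.log K ≤ Real.log 2 + L := by
        rw [hL, ← Real.log_mul (by norm_num) hlog0.ne']
        exact Real.log_le_log (by exact_mod_cast hK1) h5
      have := Real.log_two_lt_d9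
      linarith
    have hP0 : 0 ≤ P := Finset.sum_nonneg (fun _ _ => by positivity)
    calc 3 * (N : ℝ) ^ 2 * P ≤ 3 * X ^ 2 * (14 * L) := by gcongr
      _ = 42 * X ^ 2 * L := by ring
end

section
/- There exist constants c₁, c₂ > 0 such that for all sufficiently large X, c₁·X² ≤ #{(A,B) ∈ ℤ² : 4A³ + 27B² ≠ 0, for every prime p (p⁴ ∣ A implies p⁶ ∤ B), max(|A|³, |B|²) ≤ X⁶, and the elliptic curve E_{A,B}: y² = x³ + Ax + B has a rational point of order 3} ≤ c₂·X². -/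
/-- The elliptic curve `y² = x³ + Ax + B` over `ℚ`. -/
noncomputable def EAB (A B : ℤ) : WeierstrassCurve.Affine ℚ :=
  { a₁ := 0, a₂ := 0, a₃ := 0, a₄ := (A : ℚ), a₆ := (B : ℚ) }

open WeierstrassCurve.Affine in
lemma three_tors_fwd (A B : ℤ) (P : (EAB A B).Point) (hP : P ≠ 0) (h3 : 3 • P = 0) :
    ∃ x y m : ℚ, y ^ 2 = x ^ 3 + A * x + B ∧ m ^ 2 = 3 * x ∧ 2 * m * y = 3 * x ^ 2 + A := by
  have h2 : P + P = -P := by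
    rw [eq_neg_iff_add_eq_zero, ← h3]; abel
  rcases P with _ | ⟨x, y, h⟩
  · exact absurd rfl hP
  · have heq := h.1
    rw [equation_iff] at heq
    have hy : y ≠ (EAB A B).negY x y := by
      intro hy
      rw [Point.add_self_of_Y_eq hy] at h2
      exact hP (neg_eq_zero.mp h2.symm)
    rw [Point.add_self_of_Y_ne hy, Point.neg_some, Point.some.injEq] at h2
    obtain ⟨hx, -⟩ := h2
    rw [slope_of_Y_ne rfl hy] at hx
    simp only [addX, negY, EAB] at hx hy heq
    refine ⟨x, y, (3 * x ^ 2 + A) / (2 * y), by linarith, ?_, ?_⟩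
    · have : y ≠ 0 := by rintro rfl; simp at hy
      have e : (3 * x ^ 2 + 2 * 0 * x + (A:ℚ) - 0 * y) / (y - (-y - 0 * x - 0)) = (3 * x ^ 2 + A) / (2 * y) := by
        congr 1 <;> ring
      rw [e] at hx
      linarith
    · have : y ≠ 0 := by rintro rfl; simp at hy
      field_simp

open WeierstrassCurve.Affine in
lemma three_tors_bwd (A B : ℤ) (x y m : ℚ) (hy : y ≠ 0) (he : y ^ 2 = x ^ 3 + A * x + B)
    (hm : m ^ 2 = 3 * x) (hs : 2 * m * y = 3 * x ^ 2 + A) :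
    ∃ P : (EAB A B).Point, P ≠ 0 ∧ 3 • P = 0 := by
  have hns : (EAB A B).Nonsingular x y := by
    rw [nonsingular_iff]
    refine ⟨?_, ?_⟩
    · rw [equation_iff]; simp only [EAB]; linarith
    · right; simp only [EAB]; intro h; apply hy; linarith
  refine ⟨.some x y hns, Point.some_ne_zero _, ?_⟩
  have hyn : y ≠ (EAB A B).negY x y := by
    simp only [negY, EAB]; intro h; apply hy; linarith
  have hsl : (EAB A B).slope x x y y = m := by
    rw [slope_of_Y_ne rfl hyn]
    simp only [negY, EAB]
    rw [div_eq_iff (by intro h; apply hy; linarith)]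
    linarith
  have h2 : Point.some x y hns + Point.some x y hns = -Point.some x y hns := by
    rw [Point.add_self_of_Y_ne hyn, Point.neg_some, Point.some.injEq, hsl]
    have hx : (EAB A B).addX x x m = x := by simp only [addX, EAB]; linarith
    refine ⟨hx, ?_⟩
    simp only [addY, negAddY, hx]
    simp
  have : 3 • Point.some x y hns = Point.some x y hns + Point.some x y hns + Point.some x y hns := by
    abel
  rw [this, h2, neg_add_cancel]

lemma int_of_integral (r : ℚ) (h : IsIntegral ℤ r) : ∃ n : ℤ, (n : ℚ) = r := by
  obtain ⟨n, hn⟩ := IsIntegrallyClosed.isIntegral_iff.mp h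
  exact ⟨n, by simpa using hn⟩

lemma quartic_integral (r : ℚ) (a b c : ℤ) (h : r ^ 4 + a * r ^ 2 + b * r + c = 0) :
    IsIntegral ℤ r := by
  refine ⟨Polynomial.X ^ 4 + Polynomial.C a * Polynomial.X ^ 2 + Polynomial.C b * Polynomial.X
    + Polynomial.C c, by monicity!, ?_⟩
  rw [Polynomial.eval₂_add, Polynomial.eval₂_add, Polynomial.eval₂_add, Polynomial.eval₂_mul,
    Polynomial.eval₂_mul, Polynomial.eval₂_C, Polynomial.eval₂_C, Polynomial.eval₂_C,
    Polynomial.eval₂_X_pow, Polynomial.eval₂_X_pow, Polynomial.eval₂_X]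
  simpa using h

lemma upper_param (A B : ℤ) (s : ℝ) (hs : 1 ≤ s) (hA : |(A : ℝ)| ≤ s ^ 4) (hB : |(B : ℝ)| ≤ s ^ 6)
    (hP : ∃ P : (EAB A B).Point, P ≠ 0 ∧ 3 • P = 0) :
    ∃ m n : ℤ, |(m : ℝ)| ≤ 3 * s ∧ |(n : ℝ)| ≤ 54 * s ^ 3 ∧ 9 * A = 2 * m * n - 3 * m ^ 4 ∧
      81 * B = n ^ 2 - 3 * m ^ 6 - 27 * A * m ^ 2 := by
  obtain ⟨P, hP, h3⟩ := hP
  obtain ⟨x, y, m', he, hm, hsl⟩ := three_tors_fwd A B P hP h3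
  have hq : (3 * x ^ 2 + A) ^ 2 = 12 * x * (x ^ 3 + A * x + B) := by
    rw [← he, ← hsl]; linear_combination 4 * y ^ 2 * hm
  have hm2 : IsIntegral ℤ (m' ^ 2) := by
    rw [hm]
    apply quartic_integral (3 * x) (18 * A) (108 * B) (-27 * A ^ 2)
    push_cast
    linear_combination (-27) * hq
  obtain ⟨m, rfl⟩ := int_of_integral m' (IsIntegral.of_pow (by norm_num) hm2)
  have hn2 : IsIntegral ℤ ((9 * y) ^ 2) := by
    have : (9 * y) ^ 2 = ((3 * (m ^ 2) ^ 3 + 27 * A * m ^ 2 + 81 * B : ℤ) : ℚ) := by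
      push_cast; rw [hm]; linear_combination 81 * he
    rw [this]; exact isIntegral_algebraMap (R := ℤ) (A := ℚ)
  obtain ⟨n, hn⟩ := int_of_integral (9 * y) (IsIntegral.of_pow (by norm_num) hn2)
  have hy : y = n / 9 := by rw [hn]; ring
  have hx : x = m ^ 2 / 3 := by rw [hm]; ring
  have hE1 : 9 * A = 2 * m * n - 3 * m ^ 4 := by
    have : (9 * A : ℚ) = 2 * m * n - 3 * m ^ 4 := by
      subst hx hy; linear_combination (-9) * hsl
    exact_mod_cast this
  have hE2 : 81 * B = n ^ 2 - 3 * m ^ 6 - 27 * A * m ^ 2 := by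
    have : (81 * B : ℚ) = n ^ 2 - 3 * m ^ 6 - 27 * A * m ^ 2 := by
      subst hx hy; linear_combination (-81) * he
    exact_mod_cast this
  have hmb : |(m : ℝ)| ≤ 3 * s := by
    by_contra hc
    push Not at hc
    have hu : (9 * s ^ 2) < (m : ℝ) ^ 2 := by
      rw [← sq_abs (m : ℝ)]; nlinarith
    have hq' : ((m : ℝ) ^ 2) ^ 4 + 18 * A * ((m : ℝ) ^ 2) ^ 2 + 108 * B * (m : ℝ) ^ 2 - 27 * A ^ 2 = 0 := by
      have : ((m : ℚ) ^ 2) ^ 4 + 18 * A * ((m : ℚ) ^ 2) ^ 2 + 108 * B * (m : ℚ) ^ 2 - 27 * A ^ 2 = 0 := by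
        rw [hm]; linear_combination (-27) * hq
      exact_mod_cast this
    set u := (m : ℝ) ^ 2 with hu'
    rw [abs_le] at hA hB
    have hs0 : 0 < s := by linarith
    have hu0 : 0 < u := by nlinarith [sq_nonneg s]
    have ht0 : 0 < s ^ 2 := by positivity
    have e4 : s ^ 4 = (s ^ 2) ^ 2 := by ring
    have e6 : s ^ 6 = (s ^ 2) ^ 3 := by ring
    rw [e4] at hA
    rw [e6] at hB
    generalize s ^ 2 = t at *
    have hA2 : (A : ℝ) ^ 2 ≤ (t ^ 2) ^ 2 := sq_le_sq' hA.1 hA.2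
    have h1 : t ^ 2 * 81 ≤ u ^ 2 := by nlinarith
    have h2 : t ^ 3 * 729 ≤ u ^ 3 := by nlinarith [sq_nonneg u, sq_nonneg t]
    have h3 : t ^ 4 * 6561 ≤ u ^ 4 := by nlinarith [sq_nonneg u, sq_nonneg t]
    have k1 : -(t ^ 2 * u ^ 2) ≤ A * u ^ 2 := by nlinarith [sq_nonneg u]
    have k2 : -(t ^ 3 * u) ≤ B * u := by nlinarith
    have k3 : t ^ 2 * 81 * u ^ 2 ≤ u ^ 4 := by nlinarith [sq_nonneg u]
    have k4 : t ^ 3 * 729 * u ≤ u ^ 4 := by nlinarith [sq_nonneg u]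
    have k5 : 0 < u ^ 4 := by positivity
    nlinarith
  refine ⟨m, n, hmb, ?_, hE1, hE2⟩
  have hs0 : 0 ≤ s := by linarith
  refine abs_le_of_sq_le_sq ?_ (by positivity)
  have hE2' : (81 * B : ℝ) = n ^ 2 - 3 * m ^ 6 - 27 * A * m ^ 2 := by exact_mod_cast hE2
  have hu : (m : ℝ) ^ 2 ≤ 9 * s ^ 2 := by
    rw [← sq_abs (m : ℝ)]; nlinarith [abs_nonneg (m : ℝ)]
  have hu3 : (m : ℝ) ^ 6 ≤ 729 * s ^ 6 := by
    have := pow_le_pow_left₀ (sq_nonneg (m : ℝ)) hu 3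
    nlinarith
  rw [abs_le] at hA hB
  have : A * (m : ℝ) ^ 2 ≤ s ^ 4 * (9 * s ^ 2) :=
    mul_le_mul hA.2 hu (sq_nonneg _) (by positivity)
  have h6 : 0 ≤ s ^ 6 := by positivity
  nlinarith

open Finset in
lemma card_dvd_dvd (M N d : ℕ) :
    ((#{q ∈ Ioc 0 M ×ˢ Ioc 0 N | d ∣ q.1 ∧ d ∣ q.2} : ℕ) : ℝ) ≤ (M * N : ℝ) * ((d : ℝ) ^ 2)⁻¹ := by
  rw [Finset.filter_product (fun x => d ∣ x) (fun x => d ∣ x), card_product,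
    Nat.Ioc_filter_dvd_card_eq_div, Nat.Ioc_filter_dvd_card_eq_div]
  push_cast
  have h1 : ((M / d : ℕ) : ℝ) ≤ M / d := Nat.cast_div_le
  have h2 : ((N / d : ℕ) : ℝ) ≤ N / d := Nat.cast_div_le
  calc ((M / d : ℕ) : ℝ) * ((N / d : ℕ) : ℝ) ≤ (M / d) * (N / d) := by gcongr
    _ = _ := by ring

open Finset in
lemma card_dvd_snd (M N d : ℕ) :
    ((#{q ∈ Ioc 0 M ×ˢ Ioc 0 N | d ∣ q.2} : ℕ) : ℝ) ≤ (M * N : ℝ) * (d : ℝ)⁻¹ := by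
  have := Finset.filter_product (s := Ioc 0 M) (t := Ioc 0 N) (fun _ => True) (fun x => d ∣ x)
  simp only [true_and] at this
  rw [this, card_product, Nat.Ioc_filter_dvd_card_eq_div]
  simp only [filter_true, Nat.card_Ioc]
  push_cast
  have h2 : ((N / d : ℕ) : ℝ) ≤ N / d := Nat.cast_div_le
  calc ((M - 0 : ℕ) : ℝ) * ((N / d : ℕ) : ℝ) ≤ M * (N / d) := by simp only [Nat.sub_zero]; gcongr
    _ = _ := by ring

open Finset in
lemma card_good (M N : ℕ) :
    (M * N : ℝ) / 6 ≤
      ((#{q ∈ Ioc 0 M ×ˢ Ioc 0 N | Nat.Coprime q.1 q.2 ∧ ¬ 3 ∣ q.2} : ℕ) : ℝ) := by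
  set G := {q ∈ Ioc 0 M ×ˢ Ioc 0 N | Nat.Coprime q.1 q.2 ∧ ¬ 3 ∣ q.2}
  have hsub : Ioc 0 M ×ˢ Ioc 0 N ⊆ G ∪ ({q ∈ Ioc 0 M ×ˢ Ioc 0 N | 3 ∣ q.2} ∪
      ({q ∈ Ioc 0 M ×ˢ Ioc 0 N | 2 ∣ q.1 ∧ 2 ∣ q.2} ∪
       (Ioc 4 (M + 4)).biUnion fun d => {q ∈ Ioc 0 M ×ˢ Ioc 0 N | d ∣ q.1 ∧ d ∣ q.2})) := by
    intro q hq
    simp only [G, mem_union, mem_filter, mem_biUnion, hq, true_and]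
    by_cases h3 : 3 ∣ q.2
    · simp [h3]
    by_cases hc : Nat.Coprime q.1 q.2
    · exact Or.inl ⟨hc, h3⟩
    obtain ⟨p, hp, h1, h2⟩ := Nat.Prime.not_coprime_iff_dvd.mp hc
    right; right
    have hp3 : p ≠ 3 := by rintro rfl; exact h3 h2
    by_cases hp2 : p = 2
    · subst hp2; exact Or.inl ⟨h1, h2⟩
    right
    have hp4 : p ≠ 4 := by rintro rfl; revert hp; decide
    have := hp.two_le
    rw [mem_product, mem_Ioc, mem_Ioc] at hq
    have := Nat.le_of_dvd hq.1.1 h1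
    exact ⟨p, by rw [mem_Ioc]; omega, h1, h2⟩
  have h := (card_le_card hsub).trans ((card_union_le _ _).trans (Nat.add_le_add_left
    ((card_union_le _ _).trans (Nat.add_le_add_left ((card_union_le _ _).trans
      (Nat.add_le_add_left card_biUnion_le _)) _)) _))
  have h' := (Nat.cast_le (α := ℝ)).mpr h
  rw [card_product, Nat.card_Ioc, Nat.card_Ioc, Nat.sub_zero, Nat.sub_zero] at h'
  push_cast at h'
  have b1 := card_dvd_snd M N 3
  have b2 := card_dvd_dvd M N 2
  have b3 : (∑ d ∈ Ioc 4 (M + 4), ((#{q ∈ Ioc 0 M ×ˢ Ioc 0 N | d ∣ q.1 ∧ d ∣ q.2} : ℕ) : ℝ))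
      ≤ (M * N : ℝ) * (1 / 4) := by
    refine (sum_le_sum fun d _ => card_dvd_dvd M N d).trans ?_
    rw [← mul_sum]
    have := sum_Ioc_inv_sq_le_sub (α := ℝ) (k := 4) (n := M + 4) (by norm_num) (by omega)
    have h0 : (0:ℝ) ≤ (((M + 4 : ℕ) : ℝ))⁻¹ := by positivity
    gcongr
    push_cast at this h0 ⊢
    linarith
  push_cast at b1 b2
  linarith

lemma lower_inj (k b k' b' : ℤ) (hk : 0 < k) (hk' : 0 < k')
    (hA : 6 * k * b + 27 * k ^ 4 = 6 * k' * b' + 27 * k' ^ 4)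
    (hB : b ^ 2 + 18 * k ^ 3 * b + 54 * k ^ 6 = b' ^ 2 + 18 * k' ^ 3 * b' + 54 * k' ^ 6) :
    k = k' ∧ b = b' := by
  have hkk : k = k' := by
    by_contra hne
    have hune : k ^ 2 - k' ^ 2 ≠ 0 := by
      intro h
      apply hne
      nlinarith
    obtain ⟨c, hc⟩ : ∃ c, c = 2 * k * b + 9 * k ^ 4 := ⟨_, rfl⟩
    have hc' : c = 2 * k' * b' + 9 * k' ^ 4 := by linarith
    obtain ⟨D, hD⟩ : ∃ D, D = b ^ 2 + 18 * k ^ 3 * b + 54 * k ^ 6 := ⟨_, rfl⟩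
    have hD' := hD.trans hB
    have e1 : 4 * k ^ 2 * D = c ^ 2 + 18 * c * k ^ 4 - 27 * k ^ 8 := by rw [hc, hD]; ring
    have e2 : 4 * k' ^ 2 * D = c ^ 2 + 18 * c * k' ^ 4 - 27 * k' ^ 8 := by rw [hc', hD']; ring
    have hz : (k ^ 2 - k' ^ 2) * ((c - 9 * (k ^ 2 * k' ^ 2)) ^ 2
        + 27 * (k ^ 2 * k' ^ 2) * (k ^ 2 - k' ^ 2) ^ 2) = 0 := by
      linear_combination k' ^ 2 * e1 - k ^ 2 * e2
    rcases mul_eq_zero.mp hz with h | h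
    · exact hune h
    · have : 0 < (k ^ 2 - k' ^ 2) ^ 2 := by positivity
      have : 0 < 27 * (k ^ 2 * k' ^ 2) * (k ^ 2 - k' ^ 2) ^ 2 := by positivity
      nlinarith [sq_nonneg (c - 9 * (k ^ 2 * k' ^ 2))]
  subst hkk
  refine ⟨rfl, ?_⟩
  have : k * (b - b') = 0 := by linarith
  rcases mul_eq_zero.mp this with h | h <;> omega

lemma lower_minimal (k b : ℕ) (hc : Nat.Coprime k b) (h3 : ¬ 3 ∣ b) (p : ℕ) (hp : p.Prime)
    (hA : (p : ℤ) ∣ -(6 * k * b + 27 * k ^ 4))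
    (hB : (p : ℤ) ∣ (b : ℤ) ^ 2 + 18 * k ^ 3 * b + 54 * k ^ 6) : False := by
  have hpi : Prime (p : ℤ) := Nat.prime_iff_prime_int.mp hp
  have hk : ¬ (p : ℤ) ∣ k := by
    intro h
    have : (p : ℤ) ∣ (b : ℤ) ^ 2 := by
      have h2 : (p : ℤ) ∣ k * (18 * k ^ 2 * b + 54 * k ^ 5) := h.mul_right _
      have := dvd_sub hB h2
      have e : (b : ℤ) ^ 2 = (b : ℤ) ^ 2 + 18 * k ^ 3 * b + 54 * k ^ 6
          - k * (18 * k ^ 2 * b + 54 * k ^ 5) := by ring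
      rw [e]; exact this
    have hb := hpi.dvd_of_dvd_pow this
    exact Nat.Prime.not_coprime_iff_dvd.mpr ⟨p, hp, by exact_mod_cast h, by exact_mod_cast hb⟩ hc
  have hp3 : ¬ (p : ℤ) ∣ 3 := by
    intro h
    have h' : p = 3 := (Nat.prime_dvd_prime_iff_eq hp Nat.prime_three).mp (by exact_mod_cast h)
    have : (p : ℤ) ∣ (b : ℤ) ^ 2 := by
      have h2 : (p : ℤ) ∣ 3 * (6 * k ^ 3 * b + 18 * k ^ 6) := h.mul_right _
      have := dvd_sub hB h2
      have e : (b : ℤ) ^ 2 = (b : ℤ) ^ 2 + 18 * k ^ 3 * b + 54 * k ^ 6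
          - 3 * (6 * k ^ 3 * b + 18 * k ^ 6) := by ring
      rw [e]; exact this
    have hb := hpi.dvd_of_dvd_pow this
    subst h'
    exact h3 (by exact_mod_cast hb)
  have h1 : (p : ℤ) ∣ 3 * (k * (2 * b + 9 * k ^ 3)) := by
    rw [dvd_neg] at hA
    have e : 3 * ((k : ℤ) * (2 * b + 9 * k ^ 3)) = 6 * k * b + 27 * k ^ 4 := by ring
    rw [e]; exact hA
  have h2 : (p : ℤ) ∣ 2 * b + 9 * k ^ 3 :=
    (hpi.dvd_or_dvd ((hpi.dvd_or_dvd h1).resolve_left hp3)).resolve_left hk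
  have h4 : (p : ℤ) ∣ 3 ^ 3 * k ^ 6 := by
    have := dvd_sub (h2.mul_right (2 * b + 27 * k ^ 3)) (hB.mul_left 4)
    have e : (3 : ℤ) ^ 3 * k ^ 6 = (2 * b + 9 * k ^ 3) * (2 * b + 27 * k ^ 3)
        - 4 * ((b : ℤ) ^ 2 + 18 * k ^ 3 * b + 54 * k ^ 6) := by ring
    rw [e]; exact this
  rcases hpi.dvd_or_dvd h4 with h | h
  · exact hp3 (hpi.dvd_of_dvd_pow h)
  · exact hk (hpi.dvd_of_dvd_pow h)

/-- The set counted in the theorem. -/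
def cset (X : ℝ) : Set (ℤ × ℤ) := {q : ℤ × ℤ | 4 * q.1 ^ 3 + 27 * q.2 ^ 2 ≠ 0 ∧
          (∀ p : ℕ, p.Prime → (p : ℤ) ^ 4 ∣ q.1 → ¬ (p : ℤ) ^ 6 ∣ q.2) ∧
          max ((|q.1| : ℝ) ^ 3) ((|q.2| : ℝ) ^ 2) ≤ X ^ 6 ∧
          ∃ P : (EAB q.1 q.2).Point, P ≠ 0 ∧ 3 • P = 0}

/-- The box parametrizing candidates for the upper bound. -/
noncomputable def ubox (s : ℝ) : Finset (ℤ × ℤ) :=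
  Finset.Icc (-⌊3 * s⌋) ⌊3 * s⌋ ×ˢ Finset.Icc (-⌊54 * s ^ 3⌋) ⌊54 * s ^ 3⌋

/-- The parametrization used for the upper bound. -/
def uparam (r : ℤ × ℤ) : ℤ × ℤ :=
  ((2 * r.1 * r.2 - 3 * r.1 ^ 4) / 9,
    (r.2 ^ 2 - 3 * r.1 ^ 6 - 27 * ((2 * r.1 * r.2 - 3 * r.1 ^ 4) / 9) * r.1 ^ 2) / 81)

lemma cset_subset (s : ℝ) (hs : 1 ≤ s) :
    cset (s ^ 2) ⊆ ((ubox s).image uparam : Finset (ℤ × ℤ)) := by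
  rintro ⟨A, B⟩ ⟨-, -, hH, hP⟩
  simp only at hH hP
  have hA : |(A : ℝ)| ≤ s ^ 4 := by
    have : |(A : ℝ)| ^ 3 ≤ (s ^ 4) ^ 3 := (le_max_left _ _).trans (hH.trans (le_of_eq (by ring)))
    exact le_of_pow_le_pow_left₀ (by norm_num) (by positivity) this
  have hB : |(B : ℝ)| ≤ s ^ 6 := by
    have : |(B : ℝ)| ^ 2 ≤ (s ^ 6) ^ 2 := (le_max_right _ _).trans (hH.trans (le_of_eq (by ring)))
    exact le_of_pow_le_pow_left₀ (by norm_num) (by positivity) this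
  obtain ⟨m, n, hm, hn, h1, h2⟩ := upper_param A B s hs hA hB hP
  rw [Finset.mem_coe, Finset.mem_image]
  have key : ∀ (m : ℤ) (t : ℝ), |(m : ℝ)| ≤ t → m ∈ Finset.Icc (-⌊t⌋) ⌊t⌋ := by
    intro m t h
    rw [Finset.mem_Icc, ← abs_le, Int.le_floor]
    exact_mod_cast h
  refine ⟨(m, n), Finset.mem_product.mpr ⟨key _ _ hm, key _ _ hn⟩, ?_⟩
  have e1 : (2 * m * n - 3 * m ^ 4) / 9 = A := by omega
  have e2 : (n ^ 2 - 3 * m ^ 6 - 27 * A * m ^ 2) / 81 = B := by omega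
  simp only [uparam, e1, e2]

lemma card_Icc_floor (t : ℝ) (ht : 1 ≤ t) : (((Finset.Icc (-⌊t⌋) ⌊t⌋).card : ℕ) : ℝ) ≤ 3 * t := by
  have h0 : 0 ≤ ⌊t⌋ := Int.floor_nonneg.mpr (by linarith)
  rw [Int.card_Icc]
  have : (((⌊t⌋ + 1 - -⌊t⌋).toNat : ℤ) : ℝ) = ((⌊t⌋ + 1 - -⌊t⌋ : ℤ) : ℝ) := by
    rw [Int.toNat_of_nonneg (by omega)]
  rw [Int.cast_natCast] at this
  rw [this]
  push_cast
  have := Int.floor_le t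
  linarith

lemma cset_upper (s : ℝ) (hs : 1 ≤ s) : ((cset (s ^ 2)).ncard : ℝ) ≤ 1458 * (s ^ 2) ^ 2 := by
  have h1 : (cset (s ^ 2)).ncard ≤ (ubox s).card := by
    refine (Set.ncard_le_ncard (cset_subset s hs) (Finset.finite_toSet _)).trans ?_
    rw [Set.ncard_coe_finset]
    exact Finset.card_image_le
  have hs3 : 1 ≤ s ^ 3 := one_le_pow₀ hs
  have c1 := card_Icc_floor (3 * s) (by linarith)
  have c2 := card_Icc_floor (54 * s ^ 3) (by linarith)
  calc ((cset (s ^ 2)).ncard : ℝ) ≤ ((ubox s).card : ℝ) := by exact_mod_cast h1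
    _ ≤ (3 * (3 * s)) * (3 * (54 * s ^ 3)) := by
      rw [ubox, Finset.card_product, Nat.cast_mul]
      gcongr
    _ = _ := by ring

/-- The parametrization used for the lower bound. -/
def lparam (r : ℕ × ℕ) : ℤ × ℤ :=
  (-(6 * r.1 * r.2 + 27 * r.1 ^ 4), (r.2 : ℤ) ^ 2 + 18 * r.1 ^ 3 * r.2 + 54 * r.1 ^ 6)

lemma lparam_mem (s : ℝ) (hs : 1 ≤ s) (k b : ℕ) (hk : 0 < k) (hb : 0 < b) (hks : (k : ℝ) ≤ s / 10)
    (hbs : (b : ℝ) ≤ s ^ 3 / 10) (hc : Nat.Coprime k b) (h3 : ¬ 3 ∣ b) :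
    lparam (k, b) ∈ cset (s ^ 2) := by
  have hkz : (0 : ℤ) < k := by exact_mod_cast hk
  have hbz : (0 : ℤ) < b := by exact_mod_cast hb
  refine ⟨?_, ?_, ?_, ?_⟩
  · have : 4 * (lparam (k, b)).1 ^ 3 + 27 * (lparam (k, b)).2 ^ 2
        = 27 * (b : ℤ) ^ 3 * (b + 4 * k ^ 3) := by
      simp only [lparam]; ring
    rw [this]
    positivity
  · intro p hp h1 h2
    exact lower_minimal k b hc h3 p hp ((dvd_pow_self _ (by norm_num)).trans h1)
      ((dvd_pow_self _ (by norm_num)).trans h2)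
  · have hk0 : (0 : ℝ) ≤ k := by positivity
    have hb0 : (0 : ℝ) ≤ b := by positivity
    have hs0 : 0 ≤ s := by linarith
    have k3 : (k : ℝ) ^ 3 ≤ (s / 10) ^ 3 := by gcongr
    have hkb : (k : ℝ) * b ≤ s / 10 * (s ^ 3 / 10) := by gcongr
    have hk3b : (k : ℝ) ^ 3 * b ≤ (s / 10) ^ 3 * (s ^ 3 / 10) := by gcongr
    have k4 : (k : ℝ) ^ 4 ≤ (s / 10) ^ 4 := by gcongr
    have k6 : (k : ℝ) ^ 6 ≤ (s / 10) ^ 6 := by gcongr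
    have b2 : (b : ℝ) ^ 2 ≤ (s ^ 3 / 10) ^ 2 := by gcongr
    have s4 : 0 ≤ s ^ 4 := by positivity
    have s6 : 0 ≤ s ^ 6 := by positivity
    apply max_le
    · have : |((lparam (k, b)).1 : ℝ)| ≤ s ^ 4 := by
        simp only [lparam]
        push_cast
        rw [abs_neg, abs_of_nonneg (by positivity)]
        nlinarith
      calc |((lparam (k, b)).1 : ℝ)| ^ 3 ≤ (s ^ 4) ^ 3 := by gcongr
        _ = _ := by ring
    · have : |((lparam (k, b)).2 : ℝ)| ≤ s ^ 6 := by
        simp only [lparam]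
        push_cast
        rw [abs_of_nonneg (by positivity)]
        nlinarith
      calc |((lparam (k, b)).2 : ℝ)| ^ 2 ≤ (s ^ 6) ^ 2 := by gcongr
        _ = _ := by ring
  · apply three_tors_bwd _ _ (3 * (k : ℚ) ^ 2) b (-3 * k)
    · positivity
    · simp only [lparam]; push_cast; ring
    · ring
    · simp only [lparam]; push_cast; ring

lemma cset_lower (s : ℝ) (hs : 20 ≤ s) : 1 / 2400 * (s ^ 2) ^ 2 ≤ ((cset (s ^ 2)).ncard : ℝ) := by
  have hs3 : (20 : ℝ) ≤ s ^ 3 := hs.trans (le_self_pow₀ (by linarith) (by norm_num))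
  set M := ⌊s / 10⌋₊
  set N := ⌊s ^ 3 / 10⌋₊
  have hM : (M : ℝ) ≤ s / 10 := Nat.floor_le (by positivity)
  have hN : (N : ℝ) ≤ s ^ 3 / 10 := Nat.floor_le (by positivity)
  have hM' : s / 20 ≤ (M : ℝ) := by
    have := Nat.lt_floor_add_one (s / 10); linarith
  have hN' : s ^ 3 / 20 ≤ (N : ℝ) := by
    have := Nat.lt_floor_add_one (s ^ 3 / 10); linarith
  have hg := card_good M N
  set G := {q ∈ Finset.Ioc 0 M ×ˢ Finset.Ioc 0 N | Nat.Coprime q.1 q.2 ∧ ¬ 3 ∣ q.2} with hG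
  have hmem : ∀ q ∈ G, 0 < q.1 ∧ q.1 ≤ M ∧ 0 < q.2 ∧ q.2 ≤ N ∧ Nat.Coprime q.1 q.2 ∧ ¬ 3 ∣ q.2 := by
    intro q hq
    simp only [hG, Finset.mem_filter, Finset.mem_product, Finset.mem_Ioc] at hq
    tauto
  have hinj : Set.InjOn lparam G := by
    rintro ⟨k, b⟩ hq ⟨k', b'⟩ hq' he
    have h1 := hmem _ hq
    have h2 := hmem _ hq'
    simp only [lparam, Prod.mk.injEq, neg_inj] at he h1 h2
    have := lower_inj k b k' b' (by exact_mod_cast h1.1) (by exact_mod_cast h2.1) he.1 he.2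
    rw [Prod.mk.injEq]
    exact_mod_cast this
  have hsub : ((G.image lparam : Finset (ℤ × ℤ)) : Set (ℤ × ℤ)) ⊆ cset (s ^ 2) := by
    intro r hr
    rw [Finset.mem_coe, Finset.mem_image] at hr
    obtain ⟨⟨k, b⟩, hq, rfl⟩ := hr
    obtain ⟨h1, h2, h3, h4, h5, h6⟩ := hmem _ hq
    exact lparam_mem s (by linarith) k b h1 h3 (le_trans (by exact_mod_cast h2) hM)
      (le_trans (by exact_mod_cast h4) hN) h5 h6
  have hfin : (cset (s ^ 2)).Finite :=
    (Finset.finite_toSet _).subset (cset_subset s (by linarith))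
  have hle := Set.ncard_le_ncard hsub hfin
  rw [Set.ncard_coe_finset, Finset.card_image_of_injOn hinj] at hle
  have hle' : (G.card : ℝ) ≤ ((cset (s ^ 2)).ncard : ℝ) := by exact_mod_cast hle
  have hMN : s / 20 * (s ^ 3 / 20) ≤ M * N := by gcongr
  refine le_trans ?_ (hg.trans hle')
  linarith

theorem count_three_torsion_curves :
    ∃ c₁ c₂ : ℝ, 0 < c₁ ∧ 0 < c₂ ∧ ∃ X₀ : ℝ, ∀ X : ℝ, X₀ ≤ X →
      c₁ * X ^ 2 ≤
        (Set.ncard {q : ℤ × ℤ | 4 * q.1 ^ 3 + 27 * q.2 ^ 2 ≠ 0 ∧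
          (∀ p : ℕ, p.Prime → (p : ℤ) ^ 4 ∣ q.1 → ¬ (p : ℤ) ^ 6 ∣ q.2) ∧
          max ((|q.1| : ℝ) ^ 3) ((|q.2| : ℝ) ^ 2) ≤ X ^ 6 ∧
          ∃ P : (EAB q.1 q.2).Point, P ≠ 0 ∧ 3 • P = 0} : ℝ) ∧
      (Set.ncard {q : ℤ × ℤ | 4 * q.1 ^ 3 + 27 * q.2 ^ 2 ≠ 0 ∧
          (∀ p : ℕ, p.Prime → (p : ℤ) ^ 4 ∣ q.1 → ¬ (p : ℤ) ^ 6 ∣ q.2) ∧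
          max ((|q.1| : ℝ) ^ 3) ((|q.2| : ℝ) ^ 2) ≤ X ^ 6 ∧
          ∃ P : (EAB q.1 q.2).Point, P ≠ 0 ∧ 3 • P = 0} : ℝ) ≤ c₂ * X ^ 2 := by
  refine ⟨1 / 2400, 1458, by norm_num, by norm_num, 400, fun X hX => ?_⟩
  have hX2 : √X ^ 2 = X := Real.sq_sqrt (by linarith)
  have hs : 20 ≤ √X := Real.le_sqrt_of_sq_le (by linarith)
  have h1 := cset_lower (√X) hs
  have h2 := cset_upper (√X) (by linarith)
  rw [hX2] at h1 h2
  exact ⟨h1, h2⟩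
end

section
/- There exist constants c₁, c₂ > 0 such that for all sufficiently large X, c₁·X ≤ #{(A,B) ∈ ℤ² : 4A³ + 27B² ≠ 0, for every prime p (p⁴ ∣ A implies p⁶ ∤ B), max(|A|³, |B|²) ≤ X⁶, and the elliptic curve E_{A,B}: y² = x³ + Ax + B has a rational point of order 5} ≤ c₂·X. -/
namespace FiveTorsion

/-- The quartic form parametrising the coefficient `A`. -/
def fF {R : Type*} [CommRing R] (a b : R) : R :=
  -27 * (a ^ 4 - 12 * a ^ 3 * b + 14 * a ^ 2 * b ^ 2 + 12 * a * b ^ 3 + b ^ 4)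

/-- The sextic form parametrising the coefficient `B`. -/
def gF {R : Type*} [CommRing R] (a b : R) : R :=
  54 * (a ^ 2 + b ^ 2) * (a ^ 4 - 18 * a ^ 3 * b + 74 * a ^ 2 * b ^ 2 + 18 * a * b ^ 3 + b ^ 4)

lemma ident {R : Type*} [CommRing R] (a b : R) :
    38880 * a ^ 9 =
      (-67326 * a ^ 5 + 472610 * a ^ 4 * b + 45600 * a ^ 3 * b ^ 2 + 478900 * a ^ 2 * b ^ 3
        + 112950 * a * b ^ 4 + 6242 * b ^ 5) * fF a b
      + (-32943 * a ^ 3 + 47287 * a ^ 2 * b + 37749 * a * b ^ 2 + 3121 * b ^ 3) * gF a b := by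
  unfold fF gF; ring

lemma fF_rot {R : Type*} [CommRing R] (a b : R) : fF b (-a) = fF a b := by
  unfold fF; ring

lemma gF_rot {R : Type*} [CommRing R] (a b : R) : gF b (-a) = gF a b := by
  unfold gF; ring

/-! ### Curves with a point of order five -/

open WeierstrassCurve.Affine in
lemma dbl (A B : ℤ) {x y : ℚ} (h : (EAB A B).Nonsingular x y) (hy : y ≠ 0) (l x' y' : ℚ)
    (hl : 2 * y * l = 3 * x ^ 2 + A) (hx' : x' = l ^ 2 - 2 * x) (hy' : y' = -(l * (x' - x) + y)) :
    ∃ h' : (EAB A B).Nonsingular x' y',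
      Point.some x y h + Point.some x y h = Point.some x' y' h' := by
  have hny : y ≠ (EAB A B).negY x y := by
    intro hh
    simp only [negY, EAB] at hh
    apply hy
    linarith
  have hsl : (EAB A B).slope x x y y = l := by
    rw [slope_of_Y_ne rfl hny]
    simp only [negY, EAB]
    rw [div_eq_iff (by intro hh; apply hy; linarith)]
    linarith
  have e1 : (EAB A B).addX x x ((EAB A B).slope x x y y) = x' := by
    rw [hsl, hx']
    simp only [addX, EAB]
    ring
  have e2 : (EAB A B).addY x x y ((EAB A B).slope x x y y) = y' := by
    rw [addY, negAddY, e1, hsl, hy']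
    simp only [negY, EAB]
    ring
  subst e1
  subst e2
  exact ⟨_, Point.add_self_of_Y_ne hny⟩

open WeierstrassCurve.Affine in
lemma addP (A B : ℤ) {x y z w : ℚ} (h : (EAB A B).Nonsingular x y) (k : (EAB A B).Nonsingular z w)
    (hxz : x ≠ z) (l x' y' : ℚ)
    (hl : (x - z) * l = y - w) (hx' : x' = l ^ 2 - x - z) (hy' : y' = -(l * (x' - x) + y)) :
    ∃ h' : (EAB A B).Nonsingular x' y',
      Point.some x y h + Point.some z w k = Point.some x' y' h' := by
  have hsl : (EAB A B).slope x z y w = l := by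
    rw [slope_of_X_ne hxz]
    rw [div_eq_iff (sub_ne_zero.2 hxz)]
    linarith
  have e1 : (EAB A B).addX x z ((EAB A B).slope x z y w) = x' := by
    rw [hsl, hx']
    simp only [addX, EAB]
    ring
  have e2 : (EAB A B).addY x z y ((EAB A B).slope x z y w) = y' := by
    rw [addY, negAddY, e1, hsl, hy']
    simp only [negY, EAB]
    ring
  subst e1
  subst e2
  exact ⟨_, Point.add_of_X_ne hxz⟩

/-- The algebra behind the Tate normal form. -/
lemma tate_algebra (A B x y l p : ℚ) (hy : y ≠ 0) (hp : p ≠ 0)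
    (hE : y ^ 2 = x ^ 3 + A * x + B) (hl : 2 * y * l = 3 * x ^ 2 + A)
    (hx : 3 * x = p + l ^ 2) (hr : 4 * y ^ 2 + p ^ 3 = 4 * l * p * y) :
    A = fF (-p ^ 2 / (12 * y)) (y / (3 * p)) ∧ B = gF (-p ^ 2 / (12 * y)) (y / (3 * p)) := by
  have hl' : l = (4 * y ^ 2 + p ^ 3) / (4 * p * y) := by
    field_simp
    linarith
  have hx' : x = (p + l ^ 2) / 3 := by linarith
  have hA : A = 2 * y * l - 3 * x ^ 2 := by linarith
  have hB : B = y ^ 2 - x ^ 3 - A * x := by linarith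
  have hA2 : A = fF (-p ^ 2 / (12 * y)) (y / (3 * p)) := by
    rw [hA, hx', hl']
    unfold fF
    field_simp
    ring
  refine ⟨hA2, ?_⟩
  rw [hB, hA, hx', hl']
  unfold gF
  field_simp
  ring

/-- A point of order five gives parameters. -/
lemma exists_param (A B : ℤ) (P : (EAB A B).Point) (hP : P ≠ 0) (h5 : 5 • P = 0) :
    ∃ a b : ℚ, (A : ℚ) = fF a b ∧ (B : ℚ) = gF a b := by
  have h2 : P + P ≠ 0 := by
    intro h
    apply hP
    have : 5 • P = (P + P) + (P + P) + P := by abel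
    rw [this, h] at h5
    simpa using h5
  have h3 : (P + P) + P ≠ 0 := by
    intro h
    apply h2
    have : 5 • P = ((P + P) + P) + (P + P) := by abel
    rw [this, h] at h5
    simpa using h5
  have h4 : (P + P) + P = -(P + P) := by
    have : 5 • P = (P + P) + P + (P + P) := by abel
    rw [this] at h5
    exact eq_neg_of_add_eq_zero_left h5
  have h5' : P + P ≠ P := by
    intro h
    apply hP
    simpa using h
  have h6 : P + P ≠ -P := by
    intro h
    apply h3
    rw [h]; simp
  rcases P with _ | ⟨x, y, h⟩
  · exact absurd rfl hP
  have hE := ((EAB A B).equation_iff x y).1 h.1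
  simp only [EAB] at hE
  have hy0 : y ≠ 0 := by
    rintro rfl
    apply h2
    apply WeierstrassCurve.Affine.Point.add_self_of_Y_eq
    simp [WeierstrassCurve.Affine.negY, EAB]
  obtain ⟨l, hl⟩ : ∃ l : ℚ, 2 * y * l = 3 * x ^ 2 + A :=
    ⟨(3 * x ^ 2 + A) / (2 * y), by field_simp⟩
  obtain ⟨k, hk⟩ := dbl A B h hy0 l (l ^ 2 - 2 * x) (-(l * ((l ^ 2 - 2 * x) - x) + y)) hl rfl rfl
  have hne : l ^ 2 - 2 * x ≠ x := by
    intro hh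
    rcases (WeierstrassCurve.Affine.Point.X_eq_iff (h₁ := k) (h₂ := h)).1 hh with h' | h'
    · exact h5' (hk.trans h')
    · exact h6 (hk.trans h')
  set p : ℚ := 3 * x - l ^ 2 with hp
  have hp0 : p ≠ 0 := by
    intro hh
    apply hne
    linarith
  obtain ⟨r, hr⟩ := addP A B k h hne (-l + 2 * y / p) _ _
    (by field_simp; rw [hp]; ring) rfl rfl
  rw [hk, hr, WeierstrassCurve.Affine.Point.neg_some,
    WeierstrassCurve.Affine.Point.some.injEq] at h4
  have h7 := h4.1
  obtain ⟨e1, e2⟩ := tate_algebra A B x y l p hy0 hp0 (by linarith) hl (by rw [hp]; ring) (by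
    have : (-l + 2 * y / p) ^ 2 = l ^ 2 - 4 * l * y / p + 4 * y ^ 2 / p ^ 2 := by
      field_simp; ring
    rw [this] at h7
    field_simp at h7
    have hx : l ^ 2 = 3 * x - p := by rw [hp]; ring
    rw [hx] at h7
    linear_combination h7)
  exact ⟨_, _, e1, e2⟩

/-- Parameters give a point of order five. -/
lemma exists_point (A B : ℤ) (a b : ℚ) (ha : a ≠ 0) (hb : b ≠ 0)
    (hA : (A : ℚ) = fF a b) (hB : (B : ℚ) = gF a b) :
    ∃ P : (EAB A B).Point, P ≠ 0 ∧ 5 • P = 0 := by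
  have hy0 : -108 * a * b ^ 2 ≠ 0 := by positivity
  have h : (EAB A B).Nonsingular (3 * (a ^ 2 - 6 * a * b + b ^ 2)) (-108 * a * b ^ 2) := by
    rw [WeierstrassCurve.Affine.nonsingular_iff, WeierstrassCurve.Affine.equation_iff]
    constructor
    · simp only [EAB, hA, hB, fF, gF]
      ring
    · right
      simp only [EAB]
      intro hh
      apply hy0
      linarith
  obtain ⟨k, hk⟩ := dbl A B h hy0 (3 * (b - a)) (3 * (a ^ 2 + 6 * a * b + b ^ 2))
    (108 * a ^ 2 * b) (by rw [hA]; unfold fF; ring) (by ring) (by ring)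
  have hne : 3 * (a ^ 2 + 6 * a * b + b ^ 2) ≠ 3 * (a ^ 2 - 6 * a * b + b ^ 2) := by
    intro hh
    have : a * b = 0 := by linarith
    exact mul_ne_zero ha hb this
  obtain ⟨r, hr⟩ := addP A B k h hne (3 * (a + b)) (3 * (a ^ 2 + 6 * a * b + b ^ 2))
    (-(108 * a ^ 2 * b)) (by ring) (by ring) (by ring)
  refine ⟨.some _ _ h, WeierstrassCurve.Affine.Point.some_ne_zero _, ?_⟩
  have e : ∀ P : (EAB A B).Point, 5 • P = (P + P) + P + (P + P) := fun P => by abel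
  rw [e, hk, hr]
  apply WeierstrassCurve.Affine.Point.add_of_Y_eq rfl
  simp [WeierstrassCurve.Affine.negY, EAB]

/-! ### Upper bound -/

lemma den_bound (d i j : ℤ) (hc : IsCoprime d (gcd i j)) (A B : ℤ)
    (hA : d ^ 4 * A = fF i j) (hB : d ^ 6 * B = gF i j) : d ∣ 38880 := by
  have key : ∀ a b : ℤ, fF a b = d ^ 4 * A → gF a b = d ^ 6 * B → d ∣ 38880 * a ^ 9 := by
    intro a b h1 h2
    rw [ident a b, h1, h2]
    have hd4 : d ∣ d ^ 4 * A := (dvd_pow_self d (by norm_num)).mul_right _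
    have hd6 : d ∣ d ^ 6 * B := (dvd_pow_self d (by norm_num)).mul_right _
    exact dvd_add (hd4.mul_left _) (hd6.mul_left _)
  have k1 := key i j hA.symm hB.symm
  have k2 := key j (-i) (by rw [fF_rot, hA]) (by rw [gF_rot, hB])
  have k3 := dvd_gcd k1 k2
  rw [gcd_mul_left] at k3
  have hco : IsCoprime d (gcd (i ^ 9) (j ^ 9)) := by
    rw [Int.isCoprime_iff_gcd_eq_one] at hc ⊢
    have e : gcd (i ^ 9) (j ^ 9) = (gcd i j) ^ 9 := by
      rw [← Int.coe_gcd, ← Int.coe_gcd, Int.pow_gcd_pow]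
      push_cast
      rfl
    rw [e]
    exact Int.isCoprime_iff_gcd_eq_one.1 (IsCoprime.pow_right (Int.isCoprime_iff_gcd_eq_one.2 hc))
  have k4 := hco.dvd_of_dvd_mul_right k3
  exact k4.trans (by norm_num [normalize_apply])

lemma exists_common (a b : ℚ) : ∃ d i j : ℤ, 0 < d ∧ IsCoprime d (gcd i j) ∧
    (d : ℚ) * a = i ∧ (d : ℚ) * b = j := by
  have hex : ∃ d : ℕ, 0 < d ∧ (∃ i : ℤ, (d : ℚ) * a = i) ∧ (∃ j : ℤ, (d : ℚ) * b = j) := by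
    refine ⟨a.den * b.den, Nat.mul_pos a.den_pos b.den_pos, ⟨a.num * b.den, ?_⟩,
      ⟨b.num * a.den, ?_⟩⟩
    · push_cast
      rw [← Rat.mul_den_eq_num a]; ring
    · push_cast
      rw [← Rat.mul_den_eq_num b]; ring
  classical
  obtain ⟨hd, ⟨i, hi⟩, ⟨j, hj⟩⟩ := Nat.find_spec hex
  set d := Nat.find hex with hdd
  refine ⟨d, i, j, by exact_mod_cast hd, ?_, by exact_mod_cast hi, by exact_mod_cast hj⟩
  by_contra hnc
  rw [Int.isCoprime_iff_gcd_eq_one] at hnc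
  obtain ⟨p, hp, hpd⟩ := Nat.exists_prime_and_dvd hnc
  have hp1 : (p : ℤ) ∣ (d : ℤ) := (Int.natCast_dvd_natCast.2 hpd).trans (Int.gcd_dvd_left _ _)
  have hp2 : (p : ℤ) ∣ gcd i j := (Int.natCast_dvd_natCast.2 hpd).trans (Int.gcd_dvd_right _ _)
  obtain ⟨i', hi'⟩ := hp2.trans (gcd_dvd_left i j)
  obtain ⟨j', hj'⟩ := hp2.trans (gcd_dvd_right i j)
  obtain ⟨d', hd'⟩ := Int.natCast_dvd_natCast.1 hp1
  have hp0 : (p : ℚ) ≠ 0 := by exact_mod_cast hp.ne_zero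
  have hd'0 : 0 < d' := Nat.pos_of_ne_zero (by rintro rfl; omega)
  have hlt : d' < d := by
    have := hp.two_le
    rw [hd']; nlinarith
  refine Nat.find_min hex (hdd ▸ hlt) ⟨hd'0, ⟨i', ?_⟩, ⟨j', ?_⟩⟩
  · apply mul_left_cancel₀ hp0
    rw [hd', hi'] at hi
    push_cast at hi
    linarith
  · apply mul_left_cancel₀ hp0
    rw [hd', hj'] at hj
    push_cast at hj
    linarith

lemma size_bound_aux (a b X : ℝ) (hX : 0 ≤ X) (hab : |b| ≤ |a|) (hf : |fF a b| ≤ X ^ 2)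
    (hg : |gF a b| ≤ X ^ 3) : a ^ 2 ≤ 10 * X := by
  by_contra! hlt
  have ha : a ≠ 0 := by
    rintro rfl
    norm_num at hlt
    linarith
  obtain ⟨t, rfl⟩ : ∃ t, b = a * t := ⟨b / a, by field_simp⟩
  have ht : |t| ≤ 1 := by
    rw [abs_mul] at hab
    have : 0 < |a| := abs_pos.2 ha
    by_contra! h
    nlinarith
  have hpow : ∀ n : ℕ, |t ^ n| ≤ 1 := fun n => by
    rw [abs_pow]; exact pow_le_one₀ (abs_nonneg _) ht
  have t1 := abs_le.1 ht
  have t2 := abs_le.1 (hpow 2)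
  have t3 := abs_le.1 (hpow 3)
  have t4 := abs_le.1 (hpow 4)
  have t5 := abs_le.1 (hpow 5)
  have hU : |(-67326 + 472610 * t + 45600 * t ^ 2 + 478900 * t ^ 3
        + 112950 * t ^ 4 + 6242 * t ^ 5)| ≤ 1183628 := by
    rw [abs_le]; constructor <;> linarith
  have hV : |(-32943 + 47287 * t + 37749 * t ^ 2 + 3121 * t ^ 3)| ≤ 121100 := by
    rw [abs_le]; constructor <;> linarith
  have hid := ident a (a * t)
  generalize fF a (a * t) = f at *
  generalize gF a (a * t) = g at *
  set U := (-67326 + 472610 * t + 45600 * t ^ 2 + 478900 * t ^ 3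
        + 112950 * t ^ 4 + 6242 * t ^ 5) with hUd
  set V := (-32943 + 47287 * t + 37749 * t ^ 2 + 3121 * t ^ 3) with hVd
  have hid2 : 38880 * (a ^ 2) ^ 3 = a ^ 2 * (U * f) + V * g := by
    apply mul_left_cancel₀ (pow_ne_zero 3 ha)
    rw [hUd, hVd]
    linear_combination hid
  have b1 : U * f ≤ 1183628 * X ^ 2 := (le_abs_self _).trans (by
    rw [abs_mul]; exact mul_le_mul hU hf (abs_nonneg _) (by norm_num))
  have b2 : V * g ≤ 121100 * X ^ 3 := (le_abs_self _).trans (by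
    rw [abs_mul]; exact mul_le_mul hV hg (abs_nonneg _) (by norm_num))
  have hz : 0 ≤ a ^ 2 := by positivity
  generalize a ^ 2 = z at *
  have c1 : z * (U * f) ≤ z * (1183628 * X ^ 2) := mul_le_mul_of_nonneg_left b1 hz
  have c2 : (10 * X) ^ 2 ≤ z ^ 2 := pow_le_pow_left₀ (by linarith) hlt.le 2
  have c3 : (10 * X) ^ 3 ≤ z ^ 3 := pow_le_pow_left₀ (by linarith) hlt.le 3
  have c4 : z * (10 * X) ^ 2 ≤ z * z ^ 2 := mul_le_mul_of_nonneg_left c2 hz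
  have hz0 : 0 < z ^ 3 := pow_pos (by linarith) 3
  nlinarith

lemma size_bound (a b X : ℝ) (hX : 0 ≤ X) (hf : |fF a b| ≤ X ^ 2)
    (hg : |gF a b| ≤ X ^ 3) : a ^ 2 ≤ 10 * X ∧ b ^ 2 ≤ 10 * X := by
  rcases le_total |b| |a| with h | h
  · have h1 := size_bound_aux a b X hX h hf hg
    exact ⟨h1, (sq_le_sq.2 h).trans h1⟩
  · have h1 := size_bound_aux b (-a) X hX (by rwa [abs_neg]) (by rwa [fF_rot]) (by rwa [gF_rot])
    exact ⟨(sq_le_sq.2 h).trans h1, h1⟩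

/-- The set being counted. -/
def S (X : ℝ) : Set (ℤ × ℤ) :=
  {q : ℤ × ℤ | 4 * q.1 ^ 3 + 27 * q.2 ^ 2 ≠ 0 ∧
          (∀ p : ℕ, p.Prime → (p : ℤ) ^ 4 ∣ q.1 → ¬ (p : ℤ) ^ 6 ∣ q.2) ∧
          max ((|q.1| : ℝ) ^ 3) ((|q.2| : ℝ) ^ 2) ≤ X ^ 6 ∧
          ∃ P : (EAB q.1 q.2).Point, P ≠ 0 ∧ 5 • P = 0}

/-- The box of parameters. -/
noncomputable def box (X : ℝ) : Finset (ℤ × ℤ) :=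
  Finset.Icc (-⌊38880 * √(10 * X)⌋) ⌊38880 * √(10 * X)⌋ ×ˢ
    Finset.Icc (-⌊38880 * √(10 * X)⌋) ⌊38880 * √(10 * X)⌋

/-- The map from parameters to coefficients. -/
def par (v : ℤ × ℤ) : ℤ × ℤ :=
  (⌊fF ((v.1 : ℚ) / 38880) ((v.2 : ℚ) / 38880)⌋, ⌊gF ((v.1 : ℚ) / 38880) ((v.2 : ℚ) / 38880)⌋)

lemma S_subset (X : ℝ) (hX : 0 ≤ X) : S X ⊆ Set.image par (box X : Set (ℤ × ℤ)) := by
  rintro ⟨A, B⟩ ⟨-, -, hH, P, hP, h5⟩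
  obtain ⟨a, b, hA, hB⟩ := exists_param A B P hP h5
  simp only at hH hA hB
  obtain ⟨d, i, j, hd, hc, hi, hj⟩ := exists_common a b
  have hdq : (d : ℚ) ≠ 0 := by exact_mod_cast hd.ne'
  have hdvd : d ∣ 38880 := by
    apply den_bound d i j hc A B
    · have : (d : ℚ) ^ 4 * A = fF (i : ℚ) (j : ℚ) := by
        rw [hA, ← hi, ← hj]; unfold fF; ring
      unfold fF at this ⊢
      exact_mod_cast this
    · have : (d : ℚ) ^ 6 * B = gF (i : ℚ) (j : ℚ) := by
        rw [hB, ← hi, ← hj]; unfold gF; ring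
      unfold gF at this ⊢
      exact_mod_cast this
  obtain ⟨e, he⟩ := hdvd
  have heq : (38880 : ℚ) = d * e := by exact_mod_cast he
  have ha : a = ((i * e : ℤ) : ℚ) / 38880 := by
    rw [eq_div_iff (by norm_num), heq]; push_cast; rw [← hi]; ring
  have hb : b = ((j * e : ℤ) : ℚ) / 38880 := by
    rw [eq_div_iff (by norm_num), heq]; push_cast; rw [← hj]; ring
  have hfr : fF (a : ℝ) (b : ℝ) = A := by
    have : ((A : ℚ) : ℝ) = ((fF a b : ℚ) : ℝ) := by rw [hA]
    unfold fF at this ⊢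
    push_cast at this
    exact this.symm
  have hgr : gF (a : ℝ) (b : ℝ) = B := by
    have : ((B : ℚ) : ℝ) = ((gF a b : ℚ) : ℝ) := by rw [hB]
    unfold gF at this ⊢
    push_cast at this
    exact this.symm
  have hH1 : |(A : ℝ)| ^ 3 ≤ (X ^ 2) ^ 3 := by
    rw [← pow_mul]; exact (le_max_left _ _).trans hH
  have hH2 : |(B : ℝ)| ^ 2 ≤ (X ^ 3) ^ 2 := by
    rw [← pow_mul]; exact (le_max_right _ _).trans hH
  obtain ⟨s1, s2⟩ := size_bound a b X hX
    (by rw [hfr]; exact le_of_pow_le_pow_left₀ (by norm_num) (by positivity) hH1)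
    (by rw [hgr]; exact le_of_pow_le_pow_left₀ (by norm_num) (by positivity) hH2)
  have hbox : ∀ (c : ℚ) (k : ℤ), c = (k : ℚ) / 38880 → (c : ℝ) ^ 2 ≤ 10 * X →
      k ∈ Finset.Icc (-⌊38880 * √(10 * X)⌋) ⌊38880 * √(10 * X)⌋ := by
    intro c k hck hc
    have h1 := Real.abs_le_sqrt hc
    have h2 : (c : ℝ) = (k : ℝ) / 38880 := by rw [hck]; push_cast; rfl
    rw [h2, abs_le] at h1
    rw [Finset.mem_Icc, neg_le, Int.le_floor, Int.le_floor]
    push_cast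
    constructor <;> linarith [h1.1, h1.2]
  refine ⟨(i * e, j * e), ?_, ?_⟩
  · simp only [box, Finset.coe_product, Set.mem_prod]
    exact ⟨Finset.mem_coe.2 (hbox a _ ha s1), Finset.mem_coe.2 (hbox b _ hb s2)⟩
  · simp only [par]
    rw [← ha, ← hb, ← hA, ← hB]
    simp

lemma S_finite (X : ℝ) (hX : 0 ≤ X) : (S X).Finite :=
  ((box X).finite_toSet.image par).subset (S_subset X hX)

lemma S_upper (X : ℝ) (hX : 1 ≤ X) : ((S X).ncard : ℝ) ≤ 90 * 38880 ^ 2 * X := by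
  have h0 : (0 : ℝ) ≤ X := by linarith
  have h1 : (S X).ncard ≤ (box X).card := by
    refine (Set.ncard_le_ncard (S_subset X h0) ((box X).finite_toSet.image par)).trans ?_
    refine (Set.ncard_image_le (box X).finite_toSet).trans ?_
    rw [Set.ncard_coe_finset]
  set r := 38880 * √(10 * X) with hr
  have hs1 : 1 ≤ √(10 * X) := Real.one_le_sqrt.2 (by linarith)
  have hr1 : 1 ≤ r := by rw [hr]; linarith
  have hrsq : r ^ 2 = 38880 ^ 2 * (10 * X) := by
    rw [hr, mul_pow, Real.sq_sqrt (by linarith)]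
  have hfl : 0 ≤ ⌊r⌋ := Int.floor_nonneg.2 (by linarith)
  have hcard : ((box X).card : ℝ) = (2 * (⌊r⌋ : ℝ) + 1) ^ 2 := by
    rw [box, ← hr, Finset.card_product, Int.card_Icc]
    have : (((⌊r⌋ + 1 - -⌊r⌋).toNat : ℤ) : ℝ) = 2 * (⌊r⌋ : ℝ) + 1 := by
      rw [Int.toNat_of_nonneg (by omega)]; push_cast; ring
    rw [Nat.cast_mul]
    rw [Int.cast_natCast] at this
    rw [this]; ring
  have h2 : (2 * (⌊r⌋ : ℝ) + 1) ^ 2 ≤ (3 * r) ^ 2 := by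
    have : (0 : ℝ) ≤ ⌊r⌋ := by exact_mod_cast hfl
    apply pow_le_pow_left₀ (by linarith)
    linarith [Int.floor_le r]
  calc ((S X).ncard : ℝ) ≤ (box X).card := by exact_mod_cast h1
    _ ≤ (3 * r) ^ 2 := by rw [hcard]; exact h2
    _ = _ := by rw [mul_pow, hrsq]; ring

/-! ### Lower bound -/

/-- Coprime pairs in a box. -/
def cop (Y : ℕ) : Finset (ℕ × ℕ) :=
  (Finset.Ioc 0 Y ×ˢ Finset.Ioc 0 Y).filter (fun v => Nat.Coprime v.1 v.2)

lemma sum_inv_sq (n : ℕ) (hn : 2 ≤ n) :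
    ∑ d ∈ Finset.Ioc 1 n, (1 : ℝ) / (d : ℝ) ^ 2 ≤ 3 / 4 - 1 / n := by
  induction n, hn using Nat.le_induction with
  | base =>
    rw [show Finset.Ioc 1 2 = {2} by decide]
    norm_num
  | succ n hn ih =>
    rw [← Finset.insert_Ioc_right_eq_Ioc_add_one (by omega), Finset.sum_insert (by simp)]
    have hn0 : (0 : ℝ) < n := by positivity
    have : (1 : ℝ) / ((n + 1 : ℕ) : ℝ) ^ 2 ≤ 1 / n - 1 / ((n + 1 : ℕ) : ℝ) := by
      push_cast
      rw [div_sub_div _ _ (by positivity) (by positivity), div_le_div_iff₀ (by positivity)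
        (by positivity)]
      nlinarith
    linarith

lemma sum_inv_sq' (n : ℕ) : ∑ d ∈ Finset.Ioc 1 n, (1 : ℝ) / (d : ℝ) ^ 2 ≤ 3 / 4 := by
  rcases Nat.lt_or_ge n 2 with h | h
  · rw [Finset.Ioc_eq_empty (by omega)]
    norm_num
  · refine (sum_inv_sq n h).trans ?_
    have : (0 : ℝ) ≤ 1 / n := by positivity
    linarith

lemma cop_card (Y : ℕ) : (Y : ℝ) ^ 2 / 4 ≤ (cop Y).card := by
  have hsub : (Finset.Ioc 0 Y ×ˢ Finset.Ioc 0 Y) ⊆ cop Y ∪ (Finset.Ioc 1 Y).biUnion (fun d =>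
      (Finset.Ioc 0 Y).filter (fun x => d ∣ x) ×ˢ (Finset.Ioc 0 Y).filter (fun x => d ∣ x)) := by
    rintro ⟨m, n⟩ h
    by_cases hc : Nat.Coprime m n
    · exact Finset.mem_union_left _ (Finset.mem_filter.2 ⟨h, hc⟩)
    · apply Finset.mem_union_right
      have h' := Finset.mem_product.1 h
      simp only [Finset.mem_Ioc] at h'
      rw [Finset.mem_biUnion]
      refine ⟨Nat.gcd m n, ?_, ?_⟩
      · rw [Finset.mem_Ioc]
        have h1 : 0 < Nat.gcd m n := Nat.gcd_pos_of_pos_left _ h'.1.1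
        have h2 : Nat.gcd m n ≠ 1 := hc
        have h3 : Nat.gcd m n ≤ m := Nat.gcd_le_left _ h'.1.1
        omega
      · simp only [Finset.mem_product, Finset.mem_filter, Finset.mem_Ioc]
        exact ⟨⟨h'.1, Nat.gcd_dvd_left _ _⟩, ⟨h'.2, Nat.gcd_dvd_right _ _⟩⟩
  have h1 := (Finset.card_le_card hsub).trans (Finset.card_union_le _ _)
  have h2 := h1.trans (Nat.add_le_add_left Finset.card_biUnion_le _)
  simp only [Finset.card_product, Nat.Ioc_filter_dvd_card_eq_div, Nat.card_Ioc] at h2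
  have h3 : ((Y - 0 : ℕ) : ℝ) * ((Y - 0 : ℕ) : ℝ) ≤
      (cop Y).card + ∑ d ∈ Finset.Ioc 1 Y, ((Y / d : ℕ) : ℝ) * ((Y / d : ℕ) : ℝ) := by
    exact_mod_cast h2
  have h4 : ∑ d ∈ Finset.Ioc 1 Y, ((Y / d : ℕ) : ℝ) * ((Y / d : ℕ) : ℝ) ≤
      (Y : ℝ) ^ 2 * ∑ d ∈ Finset.Ioc 1 Y, (1 : ℝ) / (d : ℝ) ^ 2 := by
    rw [Finset.mul_sum]
    apply Finset.sum_le_sum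
    intro d _
    have : ((Y / d : ℕ) : ℝ) ≤ (Y : ℝ) / d := Nat.cast_div_le
    calc ((Y / d : ℕ) : ℝ) * ((Y / d : ℕ) : ℝ) ≤ ((Y : ℝ) / d) * ((Y : ℝ) / d) :=
          mul_le_mul this this (by positivity) (by positivity)
      _ = _ := by ring
  have h5 : (Y : ℝ) ^ 2 * ∑ d ∈ Finset.Ioc 1 Y, (1 : ℝ) / (d : ℝ) ^ 2 ≤ (Y : ℝ) ^ 2 * (3 / 4) :=
    mul_le_mul_of_nonneg_left (sum_inv_sq' Y) (by positivity)
  rw [Nat.sub_zero] at h3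
  nlinarith

lemma exists_minimal (N : ℕ) : ∀ F G : ℤ, F.natAbs + G.natAbs ≤ N → (F ≠ 0 ∨ G ≠ 0) →
    ∃ u : ℕ, ∃ A B : ℤ, 0 < u ∧ F = u ^ 4 * A ∧ G = u ^ 6 * B ∧
      (∀ p : ℕ, p.Prime → (p : ℤ) ^ 4 ∣ A → ¬ (p : ℤ) ^ 6 ∣ B) := by
  induction N with
  | zero => intro F G h h'; omega
  | succ N ih =>
    intro F G h h'
    by_cases hmin : ∀ p : ℕ, p.Prime → (p : ℤ) ^ 4 ∣ F → ¬ (p : ℤ) ^ 6 ∣ G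
    · exact ⟨1, F, G, one_pos, by simp, by simp, hmin⟩
    · push Not at hmin
      obtain ⟨p, hp, ⟨F', hF⟩, ⟨G', hG⟩⟩ := hmin
      have hp4 : 2 ≤ p ^ 4 := hp.two_le.trans (Nat.le_self_pow (by norm_num) p)
      have hp6 : 2 ≤ p ^ 6 := hp.two_le.trans (Nat.le_self_pow (by norm_num) p)
      have e1 : F.natAbs = p ^ 4 * F'.natAbs := by
        rw [hF, Int.natAbs_mul, Int.natAbs_pow, Int.natAbs_natCast]
      have e2 : G.natAbs = p ^ 6 * G'.natAbs := by
        rw [hG, Int.natAbs_mul, Int.natAbs_pow, Int.natAbs_natCast]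
      have hne : F' ≠ 0 ∨ G' ≠ 0 := by
        by_contra! hh
        rw [hF, hG, hh.1, hh.2] at h'
        simp at h'
      have hpos : 0 < F'.natAbs + G'.natAbs := by omega
      have l1 : 2 * F'.natAbs ≤ F.natAbs := by rw [e1]; exact Nat.mul_le_mul_right _ hp4
      have l2 : 2 * G'.natAbs ≤ G.natAbs := by rw [e2]; exact Nat.mul_le_mul_right _ hp6
      obtain ⟨u, A, B, hu, hA, hB, hm⟩ := ih F' G' (by omega) hne
      refine ⟨p * u, A, B, Nat.mul_pos hp.pos hu, ?_, ?_, hm⟩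
      · rw [hF, hA]; push_cast; ring
      · rw [hG, hB]; push_cast; ring

lemma disc_ne (m n : ℕ) (hm : 0 < m) (hn : 0 < n) (hc : Nat.Coprime m n) :
    4 * (fF (m : ℤ) (n : ℤ)) ^ 3 + 27 * (gF (m : ℤ) (n : ℤ)) ^ 2 ≠ 0 := by
  have e : 4 * (fF (m : ℤ) (n : ℤ)) ^ 3 + 27 * (gF (m : ℤ) (n : ℤ)) ^ 2 =
      -136048896 * ((m : ℤ) ^ 5 * (n : ℤ) ^ 5 * ((m : ℤ) ^ 2 - 11 * m * n - (n : ℤ) ^ 2)) := by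
    unfold fF gF; ring
  rw [e]
  have hm' : (m : ℤ) ≠ 0 := by exact_mod_cast hm.ne'
  have hn' : (n : ℤ) ≠ 0 := by exact_mod_cast hn.ne'
  refine mul_ne_zero (by norm_num) (mul_ne_zero (mul_ne_zero (pow_ne_zero _ hm')
    (pow_ne_zero _ hn')) ?_)
  intro h
  have h1 : (n : ℤ) ∣ (m : ℤ) ^ 2 := ⟨11 * m + n, by linear_combination h⟩
  have h2 : (m : ℤ) ∣ (n : ℤ) ^ 2 := ⟨m - 11 * n, by linear_combination -h⟩
  have h1' : n ∣ m ^ 2 := by exact_mod_cast h1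
  have h2' : m ∣ n ^ 2 := by exact_mod_cast h2
  have k1 : n = 1 := Nat.eq_one_of_dvd_coprimes (Nat.Coprime.pow_left 2 hc) h1' dvd_rfl
  have k2 : m = 1 := Nat.eq_one_of_dvd_coprimes (Nat.Coprime.pow_right 2 hc) dvd_rfl h2'
  subst k1 k2
  norm_num at h

lemma f_size (m n Y : ℝ) (hm : 0 ≤ m) (hn : 0 ≤ n) (hmY : m ≤ Y) (hnY : n ≤ Y) :
    |fF m n| ≤ 1080 * Y ^ 4 := by
  have hY : 0 ≤ Y := hm.trans hmY
  have key : ∀ i j : ℕ, 0 ≤ m ^ i * n ^ j ∧ m ^ i * n ^ j ≤ Y ^ (i + j) := fun i j => by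
    refine ⟨by positivity, ?_⟩
    rw [pow_add]
    exact mul_le_mul (pow_le_pow_left₀ hm hmY i) (pow_le_pow_left₀ hn hnY j) (by positivity)
      (by positivity)
  have k0 := key 4 0
  have k1 := key 3 1
  have k2 := key 2 2
  have k3 := key 1 3
  have k4 := key 0 4
  norm_num at k0 k1 k2 k3 k4
  unfold fF
  rw [abs_le]
  constructor <;> nlinarith

lemma g_size (m n Y : ℝ) (hm : 0 ≤ m) (hn : 0 ≤ n) (hmY : m ≤ Y) (hnY : n ≤ Y) :
    |gF m n| ≤ 12096 * Y ^ 6 := by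
  have hY : 0 ≤ Y := hm.trans hmY
  have key : ∀ i j : ℕ, 0 ≤ m ^ i * n ^ j ∧ m ^ i * n ^ j ≤ Y ^ (i + j) := fun i j => by
    refine ⟨by positivity, ?_⟩
    rw [pow_add]
    exact mul_le_mul (pow_le_pow_left₀ hm hmY i) (pow_le_pow_left₀ hn hnY j) (by positivity)
      (by positivity)
  have k0 := key 4 0
  have k1 := key 3 1
  have k2 := key 2 2
  have k3 := key 1 3
  have k4 := key 0 4
  have k5 := key 2 0
  have k6 := key 0 2
  norm_num at k0 k1 k2 k3 k4 k5 k6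
  have b1 : |54 * (m ^ 2 + n ^ 2)| ≤ 108 * Y ^ 2 := by
    rw [abs_le]; constructor <;> linarith
  have b2 : |m ^ 4 - 18 * m ^ 3 * n + 74 * m ^ 2 * n ^ 2 + 18 * m * n ^ 3 + n ^ 4|
      ≤ 112 * Y ^ 4 := by
    rw [abs_le]; constructor <;> nlinarith
  unfold gF
  rw [abs_mul]
  calc _ ≤ (108 * Y ^ 2) * (112 * Y ^ 4) := mul_le_mul b1 b2 (abs_nonneg _) (by positivity)
    _ = _ := by ring

lemma exists_curve (X : ℝ) (Y : ℕ) (hY : 33 * (Y : ℝ) ^ 2 ≤ X) (v : ℕ × ℕ) (hv : v ∈ cop Y) :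
    ∃ q ∈ S X, ∃ u : ℕ, 0 < u ∧ fF (v.1 : ℤ) (v.2 : ℤ) = u ^ 4 * q.1 ∧
      gF (v.1 : ℤ) (v.2 : ℤ) = u ^ 6 * q.2 := by
  obtain ⟨m, n⟩ := v
  simp only [cop, Finset.mem_filter, Finset.mem_product, Finset.mem_Ioc] at hv
  obtain ⟨⟨⟨hm, hmY⟩, ⟨hn, hnY⟩⟩, hc⟩ := hv
  have hd := disc_ne m n hm hn hc
  have hne : fF (m : ℤ) (n : ℤ) ≠ 0 ∨ gF (m : ℤ) (n : ℤ) ≠ 0 := by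
    by_contra! h
    rw [h.1, h.2] at hd
    norm_num at hd
  obtain ⟨u, A, B, hu, hA, hB, hmin⟩ := exists_minimal _ _ _ le_rfl hne
  refine ⟨(A, B), ⟨?_, hmin, ?_, ?_⟩, u, hu, hA, hB⟩
  · intro h
    simp only at h
    apply hd
    rw [hA, hB]
    linear_combination (u : ℤ) ^ 12 * h
  · have hu1 : (1 : ℝ) ≤ u := by exact_mod_cast hu
    have hX0 : 0 ≤ X := le_trans (by positivity) hY
    have hmY' : (m : ℝ) ≤ Y := by exact_mod_cast hmY
    have hnY' : (n : ℝ) ≤ Y := by exact_mod_cast hnY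
    have hfr : fF (m : ℝ) (n : ℝ) = (u : ℝ) ^ 4 * A := by
      unfold fF at hA ⊢
      exact_mod_cast hA
    have hgr : gF (m : ℝ) (n : ℝ) = (u : ℝ) ^ 6 * B := by
      unfold gF at hB ⊢
      exact_mod_cast hB
    have h1 := f_size m n Y (by positivity) (by positivity) hmY' hnY'
    have h2 := g_size m n Y (by positivity) (by positivity) hmY' hnY'
    rw [hfr, abs_mul, abs_of_pos (by positivity : (0 : ℝ) < (u : ℝ) ^ 4)] at h1
    rw [hgr, abs_mul, abs_of_pos (by positivity : (0 : ℝ) < (u : ℝ) ^ 6)] at h2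
    have h3 : |(A : ℝ)| ≤ (u : ℝ) ^ 4 * |(A : ℝ)| :=
      le_mul_of_one_le_left (abs_nonneg _) (one_le_pow₀ hu1)
    have h4 : |(B : ℝ)| ≤ (u : ℝ) ^ 6 * |(B : ℝ)| :=
      le_mul_of_one_le_left (abs_nonneg _) (one_le_pow₀ hu1)
    have p2 : (33 * (Y : ℝ) ^ 2) ^ 2 ≤ X ^ 2 := pow_le_pow_left₀ (by positivity) hY 2
    have p3 : (33 * (Y : ℝ) ^ 2) ^ 3 ≤ X ^ 3 := pow_le_pow_left₀ (by positivity) hY 3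
    have y4 : (0 : ℝ) ≤ (Y : ℝ) ^ 4 := by positivity
    have y6 : (0 : ℝ) ≤ (Y : ℝ) ^ 6 := by positivity
    have hA' : |(A : ℝ)| ≤ X ^ 2 := by nlinarith
    have hB' : |(B : ℝ)| ≤ X ^ 3 := by nlinarith
    apply max_le
    · calc |(A : ℝ)| ^ 3 ≤ (X ^ 2) ^ 3 := pow_le_pow_left₀ (abs_nonneg _) hA' 3
        _ = _ := by ring
    · calc |(B : ℝ)| ^ 2 ≤ (X ^ 3) ^ 2 := pow_le_pow_left₀ (abs_nonneg _) hB' 2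
        _ = _ := by ring
  · have hu0 : (u : ℚ) ≠ 0 := by exact_mod_cast hu.ne'
    have hm0 : (m : ℚ) ≠ 0 := by exact_mod_cast hm.ne'
    have hn0 : (n : ℚ) ≠ 0 := by exact_mod_cast hn.ne'
    apply exists_point A B ((m : ℚ) / u) ((n : ℚ) / u) (div_ne_zero hm0 hu0) (div_ne_zero hn0 hu0)
    · have hfr : fF (m : ℚ) (n : ℚ) = (u : ℚ) ^ 4 * A := by
        unfold fF at hA ⊢
        exact_mod_cast hA
      apply mul_left_cancel₀ (pow_ne_zero 4 hu0)
      rw [← hfr]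
      unfold fF
      field_simp
    · have hgr : gF (m : ℚ) (n : ℚ) = (u : ℚ) ^ 6 * B := by
        unfold gF at hB ⊢
        exact_mod_cast hB
      apply mul_left_cancel₀ (pow_ne_zero 6 hu0)
      rw [← hgr]
      unfold gF
      field_simp

open Polynomial in
/-- The polynomial whose roots are the parameters `t = a / b` of a given curve. -/
noncomputable def jpoly (A B : ℚ) : ℚ[X] :=
  C (4 * A ^ 3) * ((X ^ 2 + 1) * (X ^ 4 - 18 * X ^ 3 + 74 * X ^ 2 + 18 * X + 1)) ^ 2
    + C (27 * B ^ 2) * (X ^ 4 - 12 * X ^ 3 + 14 * X ^ 2 + 12 * X + 1) ^ 3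

lemma jpoly_deg (A B : ℚ) : (jpoly A B).natDegree ≤ 12 := by
  unfold jpoly
  compute_degree

lemma fiber (Y : ℕ) (A B : ℤ) (hd : 4 * A ^ 3 + 27 * B ^ 2 ≠ 0) (T : Finset (ℕ × ℕ))
    (hT : T ⊆ cop Y) (h : ∀ v ∈ T, ∃ u : ℕ, 0 < u ∧ fF (v.1 : ℤ) (v.2 : ℤ) = u ^ 4 * A ∧
      gF (v.1 : ℤ) (v.2 : ℤ) = u ^ 6 * B) : T.card ≤ 12 := by
  have hdq : 4 * (A : ℚ) ^ 3 + 27 * (B : ℚ) ^ 2 ≠ 0 := by exact_mod_cast hd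
  have hne : jpoly A B ≠ 0 := by
    intro h0
    have := congrArg (Polynomial.eval 0) h0
    simp [jpoly] at this
    exact hdq this
  have hle : T.card ≤ (jpoly A B).roots.toFinset.card := by
    apply Finset.card_le_card_of_injOn (fun v => (v.1 : ℚ) / v.2)
    · intro v hv
      obtain ⟨u, hu, hA, hB⟩ := h v hv
      have hv' := hT hv
      obtain ⟨m, n⟩ := v
      simp only [cop, Finset.mem_filter, Finset.mem_product, Finset.mem_Ioc] at hv'
      have hn0 : (n : ℚ) ≠ 0 := by exact_mod_cast hv'.1.2.1.ne'
      have hu0 : (u : ℚ) ≠ 0 := by exact_mod_cast hu.ne'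
      simp only [Finset.mem_coe, Multiset.mem_toFinset]
      rw [Polynomial.mem_roots hne, Polynomial.IsRoot.def]
      have hfr : fF (m : ℚ) (n : ℚ) = (u : ℚ) ^ 4 * A := by
        unfold fF at hA ⊢
        exact_mod_cast hA
      have hgr : gF (m : ℚ) (n : ℚ) = (u : ℚ) ^ 6 * B := by
        unfold gF at hB ⊢
        exact_mod_cast hB
      obtain ⟨t, ht⟩ : ∃ t : ℚ, (m : ℚ) = n * t := ⟨m / n, by field_simp⟩
      have htt : (m : ℚ) / n = t := by rw [ht]; field_simp
      rw [htt]
      rw [ht] at hfr hgr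
      have eA : (A : ℚ) = fF (n * t) (n : ℚ) / u ^ 4 := by rw [hfr]; field_simp
      have eB : (B : ℚ) = gF (n * t) (n : ℚ) / u ^ 6 := by rw [hgr]; field_simp
      simp only [jpoly, eA, eB, fF, gF, Polynomial.eval_add, Polynomial.eval_mul,
        Polynomial.eval_sub, Polynomial.eval_pow, Polynomial.eval_C, Polynomial.eval_X,
        Polynomial.eval_one, Polynomial.eval_ofNat]
      field_simp
      ring
    · rintro ⟨m, n⟩ hv ⟨m', n'⟩ hv' heq
      have h1 := hT hv
      have h2 := hT hv'
      simp only [cop, Finset.mem_filter, Finset.mem_product, Finset.mem_Ioc] at h1 h2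
      have heq' : ((m : ℤ) : ℚ) / ((n : ℤ) : ℚ) = ((m' : ℤ) : ℚ) / ((n' : ℤ) : ℚ) := by
        simpa using heq
      have := Rat.div_int_inj (by exact_mod_cast h1.1.2.1) (by exact_mod_cast h2.1.2.1)
        (by simpa using h1.2) (by simpa using h2.2) heq'
      ext
      · exact_mod_cast this.1
      · exact_mod_cast this.2
  exact hle.trans ((Multiset.toFinset_card_le _).trans
    ((Polynomial.card_roots' _).trans (jpoly_deg _ _)))

lemma S_lower_aux (X : ℝ) (Y : ℕ) (hY : 33 * (Y : ℝ) ^ 2 ≤ X) :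
    (cop Y).card ≤ 12 * (S X).ncard := by
  classical
  have hX0 : 0 ≤ X := le_trans (by positivity) hY
  have hex := exists_curve X Y hY
  choose! φ hφ hu using hex
  have hfin := S_finite X hX0
  rw [Set.ncard_eq_toFinset_card _ hfin]
  apply Finset.card_le_mul_card_image_of_maps_to (f := φ)
  · intro v hv
    rw [Set.Finite.mem_toFinset]
    exact hφ v hv
  · intro q hq
    rw [Set.Finite.mem_toFinset] at hq
    apply fiber Y q.1 q.2 hq.1 _ (Finset.filter_subset _ _)
    intro v hv
    rw [Finset.mem_filter] at hv
    rw [← hv.2]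
    exact hu v hv.1

lemma S_lower (X : ℝ) (hX : 33 ≤ X) : 1 / 6336 * X ≤ ((S X).ncard : ℝ) := by
  set r := √(X / 33) with hr
  have hr1 : 1 ≤ r := Real.one_le_sqrt.2 (by linarith)
  have hrsq : r ^ 2 = X / 33 := Real.sq_sqrt (by linarith)
  set Y := ⌊r⌋₊ with hYd
  have hYr : (Y : ℝ) ≤ r := Nat.floor_le (by linarith)
  have hY1 : (1 : ℝ) ≤ Y := by
    have : 1 ≤ Y := Nat.le_floor (by simpa using hr1)
    exact_mod_cast this
  have hYl : r < Y + 1 := Nat.lt_floor_add_one r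
  have h1 := S_lower_aux X Y (by nlinarith)
  have h2 := cop_card Y
  have h3 : ((cop Y).card : ℝ) ≤ 12 * (S X).ncard := by exact_mod_cast h1
  have h4 : r ^ 2 ≤ (2 * Y) ^ 2 := pow_le_pow_left₀ (by linarith) (by linarith) 2
  nlinarith

end FiveTorsion

theorem count_five_torsion_curves :
    ∃ c₁ c₂ : ℝ, 0 < c₁ ∧ 0 < c₂ ∧ ∃ X₀ : ℝ, ∀ X : ℝ, X₀ ≤ X →
      c₁ * X ≤
        (Set.ncard {q : ℤ × ℤ | 4 * q.1 ^ 3 + 27 * q.2 ^ 2 ≠ 0 ∧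
          (∀ p : ℕ, p.Prime → (p : ℤ) ^ 4 ∣ q.1 → ¬ (p : ℤ) ^ 6 ∣ q.2) ∧
          max ((|q.1| : ℝ) ^ 3) ((|q.2| : ℝ) ^ 2) ≤ X ^ 6 ∧
          ∃ P : (EAB q.1 q.2).Point, P ≠ 0 ∧ 5 • P = 0} : ℝ) ∧
      (Set.ncard {q : ℤ × ℤ | 4 * q.1 ^ 3 + 27 * q.2 ^ 2 ≠ 0 ∧
          (∀ p : ℕ, p.Prime → (p : ℤ) ^ 4 ∣ q.1 → ¬ (p : ℤ) ^ 6 ∣ q.2) ∧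
          max ((|q.1| : ℝ) ^ 3) ((|q.2| : ℝ) ^ 2) ≤ X ^ 6 ∧
          ∃ P : (EAB q.1 q.2).Point, P ≠ 0 ∧ 5 • P = 0} : ℝ) ≤ c₂ * X := by
  refine ⟨1 / 6336, 90 * 38880 ^ 2, by norm_num, by norm_num, 33, fun X hX => ⟨?_, ?_⟩⟩
  · exact FiveTorsion.S_lower X hX
  · exact FiveTorsion.S_upper X (by linarith)
end
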